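/- Let d = 3, c ∈ (0, √2), and let c_n ∈ (0, √2) with c_n → c. Let ψ_n be nontrivial finite energy solutions of the Gross–Pitaevskii traveling wave equation with speed c_n on ℝ³, normalized so that ψ_n(x) → 1 as |x| → ∞, and assume there is C > 0 with I^{c_n}(ψ_n) ≤ C for all n. Then there exist points ξ_n ∈ ℝ³ and a subsequence such that the translates ψ_n(· − ξ_n) converge, uniformly together with all derivatives up to any fixed order on every compact subset of ℝ³, to a nontrivial finite energy solution ψ of the Gross–Pitaevskii traveling wave equation with speed c. -/

import Mathlib

/-!
Compactness is lost only if the energy of the waves is unbounded or if all translates become trivial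
in the limit. Both are excluded by Pohozaev identities, using that the speeds stay below some
`c0 < √2`. Constants `κ < 1` and `1/2 < q < 1` with `c0 ^ 2 = 2 * κ ^ 2 * q` are fixed, and a point is
called bad for `ψ` if `‖ψ‖ ^ 2 ≤ q` there.

The Pohozaev identities involve the momentum through a vector field whose curl is the vorticity of
`ψ`. Two such fields are used. The field `curA` has the right curl everywhere and is integrable,
but is not dominated by the energy density with the sharp constant. The field `curB` is dominated by
it with constant `κ` at points that are not bad (`good_den`), but has the right curl only where
`‖ψ‖ ^ 2 > 1/2`. A wave without bad points is constant (`trivial_of_good`), so every wave of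
the sequence has a bad point.

The Lagrangian equals the energy minus `c` times the momentum, and Pohozaev's identity turns it into
a bound for both transversal Dirichlet energies, the integrals of `‖∂₂ψ‖ ^ 2` and `‖∂₃ψ‖ ^ 2`
(`trans_bound`); in comments coordinates are numbered from one, and `x₁` is the direction of
propagation. To bound the energy (`energy_bound`), space is divided into slabs orthogonal to the `x₂`
direction. Each slab meeting the bad set has a neighbourhood carrying a fixed amount of transversal
energy (`slab_bound`), by the Pohozaev identity above a highest bad point of the slab, so the number
of such slabs is bounded. Off these slabs the energy density is controlled by a Pohozaev
identity whose multiplier is constant on them (`good_int`), and across them the potential energy is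
controlled by a one-dimensional integration by parts (`dfc_bound`).

The maximum principle bounds `‖ψ‖`, and scaled gradient estimates for the Poisson equation
(`grad_est`) then bound all derivatives uniformly (`UB_of_GP`), so that a subsequence of the waves
translated to a bad point converges locally with all derivatives (`montel`). The limit solves the
equation with the limit speed, has finite energy by Fatou's lemma (`finiteEnergy_lim`), and satisfies
`‖ψ 0‖ ^ 2 ≤ q < 1`, so that it is nontrivial.
-/

open MeasureTheory Filter Complex Metric Topology

noncomputable section

abbrev Ed (d : ℕ) := EuclideanSpace ℝ (Fin d)

/-- Partial derivative of `ψ` in the `i`-th coordinate direction. -/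
def pd {d : ℕ} (ψ : Ed d → ℂ) (i : Fin d) (x : Ed d) : ℂ :=
  fderiv ℝ ψ x (EuclideanSpace.single i 1)

/-- Laplacian of `ψ`. -/
def lap {d : ℕ} (ψ : Ed d → ℂ) (x : Ed d) : ℂ :=
  ∑ i : Fin d, fderiv ℝ (fun y => fderiv ℝ ψ y (EuclideanSpace.single i 1)) x
      (EuclideanSpace.single i 1)

/-- The Gross–Pitaevskii traveling wave equation with speed `c` on `ℝ^d`:
`ic ∂_{x₁}ψ + Δψ + (1 - |ψ|²)ψ = 0`. -/
def GPeq {d : ℕ} [NeZero d] (c : ℝ) (ψ : Ed d → ℂ) : Prop :=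
  ∀ x, Complex.I * (c : ℂ) * pd ψ 0 x + lap ψ x + (1 - (‖ψ x‖ : ℂ) ^ 2) * ψ x = 0

/-- `|∇ψ|²`. -/
def gradSq {d : ℕ} (ψ : Ed d → ℂ) (x : Ed d) : ℝ := ∑ i : Fin d, ‖pd ψ i x‖ ^ 2

/-- Energy density `(1/2)|∇ψ|² + (1/4)(1 - |ψ|²)²`. -/
def eDen {d : ℕ} (ψ : Ed d → ℂ) (x : Ed d) : ℝ :=
  1 / 2 * gradSq ψ x + 1 / 4 * (1 - ‖ψ x‖ ^ 2) ^ 2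

/-- Energy `E(ψ)`. -/
def energy {d : ℕ} (ψ : Ed d → ℂ) : ℝ := ∫ x, eDen ψ x

/-- Finite energy. -/
def FiniteEnergy {d : ℕ} (ψ : Ed d → ℂ) : Prop := Integrable (eDen ψ)

/-- Momentum `P(ψ) = -∫ ∂_{x₁}(Im ψ)(Re ψ - 1)`. -/
def mom {d : ℕ} [NeZero d] (ψ : Ed d → ℂ) : ℝ :=
  -∫ x, (pd ψ 0 x).im * ((ψ x).re - 1)

/-- Lagrangian `I^c(ψ) = E(ψ) - c P(ψ)`. -/
def lagr {d : ℕ} [NeZero d] (c : ℝ) (ψ : Ed d → ℂ) : ℝ := energy ψ - c * mom ψ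

/-- `ψ` is not a constant of modulus 1. -/
def Nontriv {d : ℕ} (ψ : Ed d → ℂ) : Prop := ¬∃ z : ℂ, ‖z‖ = 1 ∧ ψ = fun _ => z

/-- The quadratic form `Q` of the second variation of `I^c` at `ψ`:
`Q(φ) = ∫ |∇φ|² - c⟨φ, i∂₁φ⟩ - (1-|ψ|²)|φ|² + 2⟨φ,ψ⟩²` with `⟨z₁,z₂⟩ = Re (z₁ conj z₂)`. -/
def Qform {d : ℕ} [NeZero d] (c : ℝ) (ψ φ : Ed d → ℂ) : ℝ :=
  ∫ x, (gradSq φ x - c * (φ x * (starRingEnd ℂ) (Complex.I * pd φ 0 x)).re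
    - (1 - ‖ψ x‖ ^ 2) * ‖φ x‖ ^ 2 + 2 * ((φ x * (starRingEnd ℂ) (ψ x)).re) ^ 2)

/-- The Morse index of `ψ` is at most `m`: every subspace of smooth compactly supported
functions on which `Q` is negative definite has dimension at most `m`. -/
def MorseIndexLE {d : ℕ} [NeZero d] (c : ℝ) (ψ : Ed d → ℂ) (m : ℕ) : Prop :=
  ∀ Y : Submodule ℝ (Ed d → ℂ),
    (∀ φ ∈ Y, ContDiff ℝ (⊤ : ℕ∞) φ ∧ HasCompactSupport φ) →
    (∀ φ ∈ Y, φ ≠ 0 → Qform c ψ φ < 0) → Module.rank ℝ Y ≤ m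

/-- `C^k_loc` convergence: uniform convergence of all iterated derivatives on every
compact set. -/
def LocCk {d : ℕ} (ψn : ℕ → Ed d → ℂ) (ψ : Ed d → ℂ) : Prop :=
  ∀ (k : ℕ) (K : Set (Ed d)), IsCompact K →
    TendstoUniformlyOn (fun n => iteratedFDeriv ℝ k (ψn n)) (iteratedFDeriv ℝ k ψ) atTop K

/-! ### Partial derivatives -/

/-- Partial derivative in the `i`-th coordinate direction. -/
def dd {F : Type*} [NormedAddCommGroup F] [NormedSpace ℝ F] (i : Fin 3) (f : Ed 3 → F) (x : Ed 3) : F :=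
  fderiv ℝ f x (EuclideanSpace.single i 1)

local notation "Sm" => ContDiff ℝ ((⊤ : ℕ∞) : WithTop ℕ∞)

section basics
variable {F : Type*} [NormedAddCommGroup F] [NormedSpace ℝ F]

lemma ContDiff.diff {f : Ed 3 → F} (hf : Sm f) : Differentiable ℝ f :=
  hf.differentiable (by simp)

@[fun_prop]
lemma ContDiff.dd {f : Ed 3 → F} (hf : Sm f) (i : Fin 3) : Sm (fun x => _root_.dd i f x) := by
  have : Sm (fderiv ℝ f) := hf.fderiv_right (by simp)
  exact this.clm_apply contDiff_const

lemma dd_add {f g : Ed 3 → F} (i : Fin 3) (hf : Sm f) (hg : Sm g) :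
    dd i (fun x => f x + g x) = fun x => dd i f x + dd i g x := by
  funext x
  simp only [dd]
  rw [fderiv_fun_add hf.diff.differentiableAt hg.diff.differentiableAt]; rfl

lemma dd_sub {f g : Ed 3 → F} (i : Fin 3) (hf : Sm f) (hg : Sm g) :
    dd i (fun x => f x - g x) = fun x => dd i f x - dd i g x := by
  funext x
  simp only [dd]
  rw [fderiv_fun_sub hf.diff.differentiableAt hg.diff.differentiableAt]; rfl

lemma dd_neg {f : Ed 3 → F} (i : Fin 3) :
    dd i (fun x => -f x) = fun x => -dd i f x := by
  funext x
  simp only [dd]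
  rw [fderiv_fun_neg]; rfl

lemma dd_const (i : Fin 3) (c : F) : dd i (fun _ => c) = fun _ => 0 := by
  funext x
  simp [dd]

lemma dd_mul {A : Type*} [NormedCommRing A] [NormedAlgebra ℝ A] {f g : Ed 3 → A} (i : Fin 3)
    (hf : Sm f) (hg : Sm g) :
    dd i (fun x => f x * g x) = fun x => dd i f x * g x + f x * dd i g x := by
  funext x
  simp only [dd]
  rw [fderiv_fun_mul hf.diff.differentiableAt hg.diff.differentiableAt]
  simp only [add_apply, ContinuousLinearMap.smul_apply, smul_eq_mul]
  ring

lemma dd_pow_two {A : Type*} [NormedCommRing A] [NormedAlgebra ℝ A] {f : Ed 3 → A} (i : Fin 3)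
    (hf : Sm f) :
    dd i (fun x => f x ^ 2) = fun x => 2 * f x * dd i f x := by
  simp only [pow_two]
  rw [dd_mul i hf hf]
  funext x; ring

lemma dd_coord (i j : Fin 3) : dd i (fun x : Ed 3 => x j) = fun _ => if i = j then (1:ℝ) else 0 := by
  funext x
  simp only [dd]
  have : HasFDerivAt (fun x : Ed 3 => x j) (EuclideanSpace.proj j : Ed 3 →L[ℝ] ℝ) x :=
    (EuclideanSpace.proj j : Ed 3 →L[ℝ] ℝ).hasFDerivAt
  rw [this.fderiv]
  simp [eq_comm, Pi.single_apply]

@[fun_prop]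
lemma sm_coord (j : Fin 3) : ContDiff ℝ (⊤ : ℕ∞) (fun x : Ed 3 => x j) :=
  (EuclideanSpace.proj j : Ed 3 →L[ℝ] ℝ).contDiff

/-- Chain rule for a one-variable outer function. -/
lemma dd_comp {h : ℝ → ℝ} (hh : ContDiff ℝ (⊤ : ℕ∞) h) {f : Ed 3 → ℝ} (hf : Sm f) (i : Fin 3) :
    dd i (fun x => h (f x)) = fun x => deriv h (f x) * dd i f x := by
  funext x
  simp only [dd]
  have h1 : HasDerivAt h (deriv h (f x)) (f x) :=
    ((hh.differentiable (by simp)) (f x)).hasDerivAt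
  have := h1.comp_hasFDerivAt x (hf.diff x).hasFDerivAt
  rw [show (fun x => h (f x)) = h ∘ f from rfl, this.fderiv]
  simp

lemma dd_comm {f : Ed 3 → F} (hf : Sm f) (i j : Fin 3) : dd i (dd j f) = dd j (dd i f) := by
  funext x
  have h1 : ∀ i j, dd i (dd j f) x = fderiv ℝ (fderiv ℝ f) x (EuclideanSpace.single i 1)
      (EuclideanSpace.single j 1) := by
    intro i j
    have h2 : DifferentiableAt ℝ (fderiv ℝ f) x :=
      ((hf.fderiv_right (m := (⊤:ℕ∞)) (by simp)).differentiable (by simp)) x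
    change fderiv ℝ (fun y => fderiv ℝ f y (EuclideanSpace.single j 1)) x _ = _
    rw [fderiv_clm_apply h2 (by fun_prop)]
    simp
  rw [h1, h1]
  have : IsSymmSndFDerivAt ℝ f x := by
    apply hf.contDiffAt.isSymmSndFDerivAt
    simp only [minSmoothness_of_isRCLikeNormedField]
    exact WithTop.coe_le_coe.2 (le_top : (2:ℕ∞) ≤ ⊤)
  exact this _ _

lemma dd_line {f : Ed 3 → F} (hf : Sm f) (i : Fin 3) (x : Ed 3) (t : ℝ) :
    HasDerivAt (fun t : ℝ => f (x + t • EuclideanSpace.single i 1))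
      (dd i f (x + t • EuclideanSpace.single i 1)) t := by
  have h1 : HasFDerivAt f (fderiv ℝ f (x + t • EuclideanSpace.single i 1))
    (x + t • EuclideanSpace.single i 1) := (hf.diff _).hasFDerivAt
  have h2 : HasDerivAt (fun t : ℝ => x + t • (EuclideanSpace.single i 1 : Ed 3))
      (EuclideanSpace.single i 1) t := by
    simpa using ((hasDerivAt_id t).smul_const (EuclideanSpace.single i 1 : Ed 3)).const_add x
  exact h1.comp_hasDerivAt t h2

end basics

/-! ### Maximum principle -/

lemma dd_dd_nonpos_of_isLocalMax {f : Ed 3 → ℝ} (hf : Sm f) {x : Ed 3} (hx : IsLocalMax f x)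
    (i : Fin 3) : dd i (dd i f) x ≤ 0 := by
  by_contra! hpos
  set g : ℝ → ℝ := fun t => f (x + t • EuclideanSpace.single i 1) with hg
  have hd : deriv g = fun t => dd i f (x + t • EuclideanSpace.single i 1) :=
    funext fun t => (dd_line hf i x t).deriv
  have hd2 : deriv (deriv g) 0 = dd i (dd i f) x := by
    rw [hd]; simpa using (dd_line (hf.dd i) i x 0).deriv
  have hcont : Continuous (fun t : ℝ => x + t • (EuclideanSpace.single i 1 : Ed 3)) := by fun_prop
  have hmax : IsLocalMax g 0 := by
    have : Tendsto (fun t : ℝ => x + t • (EuclideanSpace.single i 1 : Ed 3)) (𝓝 0) (𝓝 x) := by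
      simpa using hcont.tendsto 0
    have := this.eventually hx
    simpa [IsLocalMax, IsMaxFilter, hg] using this
  have hgc : ContinuousAt g 0 := (hf.continuous.comp hcont).continuousAt
  have hmin : IsLocalMin g 0 :=
    isLocalMin_of_deriv_deriv_pos (by rw [hd2]; exact hpos) hmax.deriv_eq_zero hgc
  have hconst : g =ᶠ[𝓝 0] fun _ => g 0 := by
    filter_upwards [hmax, hmin] with t h1 h2 using le_antisymm h1 h2
  have h1 : deriv g =ᶠ[𝓝 0] fun _ => 0 := by
    have := hconst.deriv
    simpa using this
  have h2 : deriv (deriv g) 0 = 0 := by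
    rw [h1.deriv_eq]; simp
  rw [hd2] at h2
  exact hpos.ne' h2

/-- Weak maximum principle for strictly subharmonic functions. -/
lemma max_principle {f : Ed 3 → ℝ} (hf : Sm f) {K : Set (Ed 3)} (hK : IsCompact K)
    (hb : ∀ x ∈ K, x ∈ interior K ∨ f x ≤ 0)
    (hL : ∀ x ∈ K, 0 < ∑ i, dd i (dd i f) x) : ∀ x ∈ K, f x ≤ 0 := by
  intro y hy
  obtain ⟨x, hx, hmax⟩ := hK.exists_isMaxOn ⟨y, hy⟩ hf.continuous.continuousOn
  rcases hb x hx with h | h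
  · have hl : IsLocalMax f x := hmax.isLocalMax (mem_interior_iff_mem_nhds.1 h)
    have := Finset.sum_nonpos (s := Finset.univ) fun i _ => dd_dd_nonpos_of_isLocalMax hf hl i
    exact absurd (hL x hx) (not_lt.2 this)
  · exact (hmax hy).trans h

/-! ### Interior gradient estimate -/

/-- Chain rule for the composition with an affine map whose linear part has the `j`-th basis
vector as an eigenvector. -/
lemma dd_affine {F : Type*} [NormedAddCommGroup F] [NormedSpace ℝ F] {u : Ed 3 → F} (hu : Sm u)
    (L : Ed 3 →L[ℝ] Ed 3) (p : Ed 3) (j : Fin 3) {s : ℝ}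
    (hs : L (EuclideanSpace.single j 1) = s • EuclideanSpace.single j 1) :
    dd j (fun x => u (p + L x)) = fun x => s • dd j u (p + L x) := by
  funext x
  have h1 : HasFDerivAt u (fderiv ℝ u (p + L x)) (p + L x) := (hu.diff _).hasFDerivAt
  have h2 : HasFDerivAt (fun x => p + L x) L x := L.hasFDerivAt.const_add p
  have h3 := h1.comp x h2
  simp only [dd]
  rw [show (fun x => u (p + L x)) = u ∘ fun x => p + L x from rfl, h3.fderiv]
  simp [hs]

lemma dd_smul_const {F : Type*} [NormedAddCommGroup F] [NormedSpace ℝ F] {u : Ed 3 → F} (hu : Sm u)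
    (s : ℝ) (j : Fin 3) : dd j (fun x => s • u x) = fun x => s • dd j u x := by
  funext x
  simp only [dd]
  rw [fderiv_fun_const_smul (hu.diff _)]; rfl

/-- The reflection of `ℝ³` that changes the sign of the `i`-th coordinate. -/
def rflx (i : Fin 3) : Ed 3 →L[ℝ] Ed 3 :=
  ContinuousLinearMap.id ℝ (Ed 3) - (2:ℝ) • (EuclideanSpace.proj i : Ed 3 →L[ℝ] ℝ).smulRight
    (EuclideanSpace.single i 1)

lemma rflx_single (i j : Fin 3) : rflx i (EuclideanSpace.single j 1) =
    (if i = j then (-1:ℝ) else 1) • EuclideanSpace.single j 1 := by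
  by_cases h : i = j
  · subst h
    ext k; simp [rflx, Pi.single_apply]; split_ifs <;> norm_num
  · ext k; simp [rflx, h]

lemma lap_affine_rflx {u : Ed 3 → ℝ} (hu : Sm u) (p : Ed 3) (i : Fin 3) (j : Fin 3) (x : Ed 3) :
    dd j (dd j (fun x => u (p + rflx i x))) x = dd j (dd j u) (p + rflx i x) := by
  have hsm : ∀ {v : Ed 3 → ℝ}, Sm v → Sm (fun x => v (p + rflx i x)) := fun hv => by
    exact hv.comp (contDiff_const.add (rflx i).contDiff)
  rw [dd_affine hu _ _ _ (rflx_single i j), dd_smul_const (hsm (hu.dd j)),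
    dd_affine (hu.dd j) _ _ _ (rflx_single i j)]
  simp only [smul_smul]
  split_ifs <;> simp

/-- One-sided gradient estimate. The half-difference of `u (p + ·)` and its reflection in the
`i`-th coordinate vanishes on `{xᵢ = 0}`, is bounded by `M`, and has Laplacian bounded by `N`. On
the half cube `|xⱼ| ≤ 1`, `0 ≤ xᵢ`, it is dominated by a quadratic barrier `β`, and comparing the
derivatives of the two functions at the origin gives the estimate. The strict inequality `N < N'`
makes the difference with the barrier strictly subharmonic. -/
lemma grad_est_aux {u : Ed 3 → ℝ} (hu : Sm u) {M N N' : ℝ} (hM : ∀ x, |u x| ≤ M)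
    (hN : ∀ x, |∑ j, dd j (dd j u) x| ≤ N) (hNN : N < N') (i : Fin 3) (p : Ed 3) :
    dd i u p ≤ 3 * M + N' / 2 := by
  have hM0 : 0 ≤ M := (abs_nonneg _).trans (hM p)
  have hN0 : 0 ≤ N := (abs_nonneg _).trans (hN p)
  have hsm1 : Sm (fun x => u (p + x)) := hu.comp (contDiff_const.add contDiff_id)
  have hsm2 : Sm (fun x => u (p + rflx i x)) := hu.comp (contDiff_const.add (rflx i).contDiff)
  -- The first term makes `β ≥ M` on the faces `|xⱼ| = 1`, the second one makes `Δβ = -N'`.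
  set β : Ed 3 → ℝ := fun x => M * (x 0 ^ 2 + x 1 ^ 2 + x 2 ^ 2 + (3 * x i - 3 * x i ^ 2))
    + N' / 2 * (x i - x i ^ 2) with hβ
  have hβs : Sm β := by simp only [hβ]; fun_prop
  have hβL : ∀ x, ∑ j, dd j (dd j β) x = - N' := by
    intro x
    have key : ∀ j, dd j β = fun x => M * (2 * x j + (if j = i then 1 else 0) * (3 - 6 * x i))
        + N' / 2 * ((if j = i then 1 else 0) * (1 - 2 * x i)) := by
      intro j
      simp (disch := fun_prop) only [hβ, dd_add, dd_mul, dd_sub, dd_const, dd_pow_two, dd_coord]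
      funext x
      fin_cases j <;> simp <;> split_ifs <;> ring
    have key2 : ∀ j, dd j (dd j β) = fun x => M * (2 - (if j = i then 1 else 0) * 6)
        - N' * ((if j = i then 1 else 0)) := by
      intro j
      rw [key]
      simp (disch := fun_prop) only [dd_add, dd_mul, dd_sub, dd_const, dd_pow_two, dd_coord]
      funext x
      split_ifs <;> simp <;> ring
    simp only [key2, Fin.sum_univ_three]
    fin_cases i <;> simp <;> ring
  set f : Ed 3 → ℝ := fun x => (1/2 * u (p + x) - 1/2 * u (p + rflx i x)) - β x with hf
  have hfs : Sm f := by simp only [hf]; fun_prop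
  have hfL : ∀ x, 0 < ∑ j, dd j (dd j f) x := by
    intro x
    have h1 : ∀ j, dd j (fun x => u (p + x)) = fun x => dd j u (p + x) := fun j => by
      simpa using dd_affine hu (ContinuousLinearMap.id ℝ (Ed 3)) p j (s := 1) (by simp)
    have h1' : ∀ j, dd j (fun x => dd j u (p + x)) = fun x => dd j (dd j u) (p + x) := fun j => by
      simpa using dd_affine (hu.dd j) (ContinuousLinearMap.id ℝ (Ed 3)) p j (s := 1) (by simp)
    have hs1 : ∀ j, Sm (fun x => dd j u (p + x)) := fun j => by
      rw [← h1]; exact hsm1.dd j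
    have key : ∀ j, dd j (dd j f) x = 1/2 * dd j (dd j u) (p + x) -
        1/2 * dd j (dd j u) (p + rflx i x) - dd j (dd j β) x := by
      intro j
      have e1 : dd j f = fun x => (1/2 * dd j u (p + x)
          - 1/2 * dd j (fun x => u (p + rflx i x)) x) - dd j β x := by
        simp (disch := fun_prop) only [hf, dd_sub, dd_mul, dd_const, h1]
        simp
      rw [e1]
      have := hs1 j
      have := hsm2.dd j
      have := hβs.dd j
      rw [← lap_affine_rflx hu]
      simp (disch := fun_prop) only [dd_sub, dd_mul, dd_const, h1']
      simp
    simp only [key, Finset.sum_sub_distrib, hβL, ← Finset.mul_sum]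
    have a1 := abs_le.1 (hN (p + x))
    have a2 := abs_le.1 (hN (p + rflx i x))
    linarith
  set K : Set (Ed 3) := {x | (∀ j, |x j| ≤ 1) ∧ 0 ≤ x i} with hKdef
  have hKc : IsCompact K := by
    apply Metric.isCompact_of_isClosed_isBounded
    · have : K = (⋂ j, {x : Ed 3 | |x j| ≤ 1}) ∩ {x | 0 ≤ x i} := by
        ext x; simp [hKdef]
      rw [this]
      refine (isClosed_iInter fun j => ?_).inter ?_
      · exact isClosed_le (by fun_prop) continuous_const
      · exact isClosed_le continuous_const (by fun_prop)
    · refine (Metric.isBounded_closedBall (x := (0 : Ed 3)) (r := 2)).subset fun x hx => ?_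
      rw [mem_closedBall_zero_iff]
      have h3 : ‖x‖ ^ 2 ≤ 3 := by
        rw [EuclideanSpace.norm_sq_eq, Fin.sum_univ_three]
        have := fun j => (sq_le_one_iff_abs_le_one _).2 (hx.1 j)
        simp only [Real.norm_eq_abs, sq_abs]
        linarith [this 0, this 1, this 2]
      nlinarith [norm_nonneg x]
  have hxi : ∀ x : Ed 3, x i ^ 2 ≤ x 0 ^ 2 + x 1 ^ 2 + x 2 ^ 2 := fun x => by
    fin_cases i <;> simp <;> nlinarith [sq_nonneg (x 0), sq_nonneg (x 1), sq_nonneg (x 2)]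
  have hmp := max_principle hfs hKc (fun x hx => ?_) (fun x _ => hfL x)
  · -- The function `t ↦ f (t eᵢ)` is nonpositive for `0 < t < 1` and vanishes at `0`, so its
    -- derivative at `0` is nonpositive.
    have hd1 := dd_line hu i p 0
    have hd2 : HasDerivAt (fun t : ℝ => u (p + (-t) • EuclideanSpace.single i 1)) (- dd i u p) 0 := by
      have := dd_line hu i p (-0)
      have := this.scomp (0:ℝ) (hasDerivAt_neg (0:ℝ))
      simpa [Function.comp_def] using this
    have hd : HasDerivAt (fun t : ℝ => 1/2 * u (p + t • EuclideanSpace.single i 1) -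
        1/2 * u (p + (-t) • EuclideanSpace.single i 1) - (M * (3 * t - 2 * t ^ 2) +
        N' / 2 * (t - t ^ 2))) (dd i u p - (3 * M + N' / 2)) 0 := by
      have h3 : HasDerivAt (fun t : ℝ => M * (3 * t - 2 * t ^ 2) +
        N' / 2 * (t - t ^ 2)) (3 * M + N' / 2) 0 := by
        have := ((((hasDerivAt_id (0:ℝ)).const_mul 3).sub
          (((hasDerivAt_id (0:ℝ)).pow 2).const_mul 2)).const_mul M).add
          (((hasDerivAt_id (0:ℝ)).sub ((hasDerivAt_id (0:ℝ)).pow 2)).const_mul (N' / 2))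
        refine HasDerivAt.congr_deriv this ?_
        simp; ring
      refine HasDerivAt.congr_deriv (((hd1.const_mul (1/2)).sub (hd2.const_mul (1/2))).sub h3) ?_
      simp; ring
    by_contra! hcon
    have hpos : 0 < dd i u p - (3 * M + N' / 2) := by linarith
    have hs := hd.tendsto_slope.eventually (lt_mem_nhds hpos)
    have hs' := hs.filter_mono (nhdsGT_le_nhdsNE (0:ℝ))
    have h1 : ∀ᶠ t in 𝓝[>] (0:ℝ), t ∈ Set.Ioo (0:ℝ) 1 := Ioo_mem_nhdsGT one_pos
    obtain ⟨t, ht, ht1⟩ := (hs'.and h1).exists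
    have hx : t • (EuclideanSpace.single i 1 : Ed 3) ∈ K := by
      refine ⟨fun j => ?_, ?_⟩
      · by_cases h : j = i
        · simp [h, abs_of_pos ht1.1, ht1.2.le]
        · simp [h]
      · simp [ht1.1.le]
    have h2 := hmp _ hx
    have e1 : rflx i (t • (EuclideanSpace.single i 1 : Ed 3)) = (-t) • EuclideanSpace.single i 1 := by
      rw [map_smul, rflx_single]; simp
    have e2 : (t • (EuclideanSpace.single i 1 : Ed 3)) 0 ^ 2 +
       (t • (EuclideanSpace.single i 1 : Ed 3)) 1 ^ 2 +
       (t • (EuclideanSpace.single i 1 : Ed 3)) 2 ^ 2 = t ^ 2 := by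
      fin_cases i <;> simp
    simp only [hf, hβ, e1, e2] at h2
    have e3 : (t • (EuclideanSpace.single i 1 : Ed 3)) i = t := by simp
    rw [e3] at h2
    simp only [slope_def_field] at ht
    simp only [zero_smul, neg_zero, add_zero] at ht
    rw [div_pos_iff] at ht
    rcases ht with ht | ht
    · have := ht.1
      nlinarith
    · linarith [ht.2, ht1.1]
  · have hj1 : ∀ j, x j ^ 2 ≤ 1 := fun j => (sq_le_one_iff_abs_le_one _).2 (hx.1 j)
    have hxi1 : x i ≤ 1 := (abs_le.1 (hx.1 i)).2
    by_cases hb : (∃ j, |x j| = 1) ∨ x i = 0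
    · right
      simp only [hf, sub_nonpos]
      rcases hb with ⟨j, hj⟩ | h0
      · have hb1 : M ≤ β x := by
          simp only [hβ]
          have hxj : x j ^ 2 = 1 := by rw [← sq_abs, hj]; norm_num
          have h5 : 0 ≤ N' / 2 * (x i - x i ^ 2) := by
            apply mul_nonneg (by linarith); nlinarith [hx.2]
          have h6 : 1 ≤ x 0 ^ 2 + x 1 ^ 2 + x 2 ^ 2 + (3 * x i - 3 * x i ^ 2) := by
            have : x j ^ 2 ≤ x 0 ^ 2 + x 1 ^ 2 + x 2 ^ 2 := by
              fin_cases j <;> simp <;> nlinarith [sq_nonneg (x 0), sq_nonneg (x 1), sq_nonneg (x 2)]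
            nlinarith [hx.2]
          nlinarith
        have a1 := abs_le.1 (hM (p + x))
        have a2 := abs_le.1 (hM (p + rflx i x))
        linarith
      · have : rflx i x = x := by
          ext k; simp [rflx, h0]
        rw [this, sub_self]
        simp only [hβ, h0]
        have : 0 ≤ M * (x 0 ^ 2 + x 1 ^ 2 + x 2 ^ 2) := by positivity
        linarith
    · left
      push Not at hb
      have hU : IsOpen ((⋂ j, {x : Ed 3 | |x j| < 1}) ∩ {x | 0 < x i}) := by
        refine (isOpen_iInter_of_finite fun j => ?_).inter ?_
        · exact isOpen_lt (by fun_prop) continuous_const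
        · exact isOpen_lt continuous_const (by fun_prop)
      refine interior_maximal ?_ hU ⟨?_, ?_⟩
      · rintro y ⟨h1, h2⟩
        simp only [Set.mem_iInter, Set.mem_setOf_eq] at h1 h2
        exact ⟨fun j => (h1 j).le, h2.le⟩
      · simp only [Set.mem_iInter, Set.mem_setOf_eq]
        exact fun j => lt_of_le_of_ne (hx.1 j) (hb.1 j)
      · exact lt_of_le_of_ne hx.2 (Ne.symm hb.2)

/-- A function with bounded values and bounded Laplacian has bounded gradient. -/
lemma grad_est {u : Ed 3 → ℝ} (hu : Sm u) {M N : ℝ} (hM : ∀ x, |u x| ≤ M)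
    (hN : ∀ x, |∑ j, dd j (dd j u) x| ≤ N) (i : Fin 3) (p : Ed 3) :
    |dd i u p| ≤ 3 * M + N / 2 := by
  rw [abs_le]
  constructor
  · refine le_of_forall_pos_le_add fun ε hε => ?_
    have h := grad_est_aux (u := fun x => - u x) hu.neg (M := M) (N := N) (N' := N + ε)
      (fun x => by simpa using hM x)
      (fun x => by simpa [dd_neg] using hN x) (by linarith) i p
    rw [dd_neg] at h
    linarith
  · refine le_of_forall_pos_le_add fun ε hε => ?_
    have h := grad_est_aux (u := u) hu (M := M) (N := N) (N' := N + ε) hM hN (by linarith) i p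
    linarith

/-! ### Uniform derivative bounds for families of functions -/

lemma dd_clm {F G : Type*} [NormedAddCommGroup F] [NormedSpace ℝ F] [NormedAddCommGroup G]
    [NormedSpace ℝ G] (L : F →L[ℝ] G) {f : Ed 3 → F} (hf : Sm f) (i : Fin 3) :
    dd i (fun x => L (f x)) = fun x => L (dd i f x) := by
  funext x
  have := L.hasFDerivAt.comp x (hf.diff x).hasFDerivAt
  simp only [dd]
  rw [show (fun x => L (f x)) = L ∘ f from rfl, this.fderiv]; rfl

lemma sm_re {f : Ed 3 → ℂ} (hf : Sm f) : Sm (fun x => (f x).re) := reCLM.contDiff.comp hf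
lemma sm_im {f : Ed 3 → ℂ} (hf : Sm f) : Sm (fun x => (f x).im) := imCLM.contDiff.comp hf
lemma sm_conj {f : Ed 3 → ℂ} (hf : Sm f) : Sm (fun x => (starRingEnd ℂ) (f x)) :=
  conjCLE.contDiff.comp hf
lemma dd_re {f : Ed 3 → ℂ} (hf : Sm f) (i : Fin 3) :
    dd i (fun x => (f x).re) = fun x => (dd i f x).re := dd_clm reCLM hf i
lemma dd_im {f : Ed 3 → ℂ} (hf : Sm f) (i : Fin 3) :
    dd i (fun x => (f x).im) = fun x => (dd i f x).im := dd_clm imCLM hf i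
lemma dd_conj {f : Ed 3 → ℂ} (hf : Sm f) (i : Fin 3) :
    dd i (fun x => (starRingEnd ℂ) (f x)) = fun x => (starRingEnd ℂ) (dd i f x) :=
  dd_clm (conjCLE : ℂ →L[ℝ] ℂ) hf i

section families

variable {ι : Type*}

/-- All partial derivatives of order at most `k` of the members of the family `f` are bounded,
uniformly over the family. -/
def UB : ℕ → (ι → Ed 3 → ℂ) → Prop
  | 0, f => ∃ C, ∀ n x, ‖f n x‖ ≤ C
  | k + 1, f => (∃ C, ∀ n x, ‖f n x‖ ≤ C) ∧ ∀ i, UB k (fun n => dd i (f n))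

lemma UB.zero {k : ℕ} {f : ι → Ed 3 → ℂ} (h : UB k f) : ∃ C, ∀ n x, ‖f n x‖ ≤ C := by
  cases k with
  | zero => exact h
  | succ k => exact h.1

lemma UB.pred {k : ℕ} : ∀ {f : ι → Ed 3 → ℂ}, UB (k + 1) f → UB k f := by
  induction k with
  | zero => exact fun h => h.1
  | succ k ih => exact fun h => ⟨h.1, fun i => ih (h.2 i)⟩

lemma UB.add {k : ℕ} : ∀ {f g : ι → Ed 3 → ℂ}, (∀ n, Sm (f n)) → (∀ n, Sm (g n)) →
    UB k f → UB k g → UB k (fun n x => f n x + g n x) := by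
  have h0 : ∀ {f g : ι → Ed 3 → ℂ}, (∃ C, ∀ n x, ‖f n x‖ ≤ C) → (∃ C, ∀ n x, ‖g n x‖ ≤ C) →
    ∃ C, ∀ n x, ‖f n x + g n x‖ ≤ C := by
    rintro f g ⟨C, hC⟩ ⟨D, hD⟩
    exact ⟨C + D, fun n x => (norm_add_le _ _).trans (add_le_add (hC n x) (hD n x))⟩
  induction k with
  | zero => exact fun _ _ h1 h2 => h0 h1 h2
  | succ k ih =>
    intro f g sf sg h1 h2
    refine ⟨h0 h1.1 h2.1, fun i => ?_⟩
    have : (fun n => dd i (fun x => f n x + g n x)) =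
      fun n x => dd i (f n) x + dd i (g n) x := funext fun n => dd_add i (sf n) (sg n)
    rw [this]
    exact ih (fun n => (sf n).dd i) (fun n => (sg n).dd i) (h1.2 i) (h2.2 i)

lemma UB.mul {k : ℕ} : ∀ {f g : ι → Ed 3 → ℂ}, (∀ n, Sm (f n)) → (∀ n, Sm (g n)) →
    UB k f → UB k g → UB k (fun n x => f n x * g n x) := by
  have h0 : ∀ {f g : ι → Ed 3 → ℂ}, (∃ C, ∀ n x, ‖f n x‖ ≤ C) → (∃ C, ∀ n x, ‖g n x‖ ≤ C) →
    ∃ C, ∀ n x, ‖f n x * g n x‖ ≤ C := by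
    rintro f g ⟨C, hC⟩ ⟨D, hD⟩
    refine ⟨C * D, fun n x => (norm_mul_le _ _).trans ?_⟩
    exact mul_le_mul (hC n x) (hD n x) (norm_nonneg _) ((norm_nonneg _).trans (hC n x))
  induction k with
  | zero => exact fun _ _ h1 h2 => h0 h1 h2
  | succ k ih =>
    intro f g sf sg h1 h2
    refine ⟨h0 h1.1 h2.1, fun i => ?_⟩
    have : (fun n => dd i (fun x => f n x * g n x)) =
      fun n x => dd i (f n) x * g n x + f n x * dd i (g n) x :=
      funext fun n => dd_mul i (sf n) (sg n)
    rw [this]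
    exact UB.add (fun n => ((sf n).dd i).mul (sg n)) (fun n => (sf n).mul ((sg n).dd i))
      (ih (fun n => (sf n).dd i) sg (h1.2 i) h2.pred) (ih sf (fun n => (sg n).dd i) h1.pred (h2.2 i))

lemma UB.conj {k : ℕ} : ∀ {f : ι → Ed 3 → ℂ}, (∀ n, Sm (f n)) →
    UB k f → UB k (fun n x => (starRingEnd ℂ) (f n x)) := by
  induction k with
  | zero =>
    rintro f _ ⟨C, hC⟩
    exact ⟨C, by simpa using hC⟩
  | succ k ih =>
    rintro f sf ⟨⟨C, hC⟩, h2⟩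
    refine ⟨⟨C, by simpa using hC⟩, fun i => ?_⟩
    have : (fun n => dd i (fun x => (starRingEnd ℂ) (f n x))) =
      fun n x => (starRingEnd ℂ) (dd i (f n) x) := funext fun n => dd_conj (sf n) i
    rw [this]
    exact ih (fun n => (sf n).dd i) (h2 i)

lemma UB.const {k : ℕ} : ∀ {c : ι → ℂ} {C : ℝ}, (∀ n, ‖c n‖ ≤ C) →
    UB k (fun n (_ : Ed 3) => c n) := by
  induction k with
  | zero => exact fun {c C} h => ⟨C, fun n _ => h n⟩
  | succ k ih =>
    intro c C h
    refine ⟨⟨C, fun n _ => h n⟩, fun i => ?_⟩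
    simp only [dd_const]
    exact ih (C := 0) (by simp)

/-- One derivative is gained from a bound on the Laplacian: `grad_est` applies to every partial
derivative of order at most `k`. -/
lemma UB.of_lap {k : ℕ} : ∀ {f : ι → Ed 3 → ℂ}, (∀ n, Sm (f n)) → UB k f →
    UB k (fun n x => ∑ j, dd j (dd j (f n)) x) → UB (k + 1) f := by
  induction k with
  | zero =>
    rintro f sf ⟨M, hM⟩ ⟨N, hN⟩
    refine ⟨⟨M, hM⟩, fun i => ⟨2 * (3 * M + N / 2), fun n x => ?_⟩⟩
    have h1 := grad_est (sm_re (sf n)) (M := M) (N := N)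
      (fun y => (abs_re_le_norm _).trans (hM n y))
      (fun y => by
        have : ∀ j, dd j (dd j (fun x => (f n x).re)) y = (dd j (dd j (f n)) y).re := fun j => by
          rw [dd_re (sf n), dd_re ((sf n).dd j)]
        simp only [this, ← re_sum]
        exact (abs_re_le_norm _).trans (hN n y)) i x
    have h2 := grad_est (sm_im (sf n)) (M := M) (N := N)
      (fun y => (abs_im_le_norm _).trans (hM n y))
      (fun y => by
        have : ∀ j, dd j (dd j (fun x => (f n x).im)) y = (dd j (dd j (f n)) y).im := fun j => by
          rw [dd_im (sf n), dd_im ((sf n).dd j)]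
        simp only [this, ← im_sum]
        exact (abs_im_le_norm _).trans (hN n y)) i x
    rw [dd_re (sf n)] at h1
    rw [dd_im (sf n)] at h2
    have := norm_le_abs_re_add_abs_im (dd i (f n) x)
    linarith
  | succ k ih =>
    intro f sf h1 h2
    refine ⟨h1.1, fun i => ih (fun n => (sf n).dd i) (h1.2 i) ?_⟩
    have : (fun n x => ∑ j, dd j (dd j (dd i (f n))) x) =
        fun n => dd i (fun x => ∑ j, dd j (dd j (f n)) x) := by
      funext n
      have e : ∀ j, dd j (dd j (dd i (f n))) = dd i (dd j (dd j (f n))) := fun j => by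
        rw [dd_comm (sf n) j i, dd_comm ((sf n).dd j) j i]
      have s := fun j => (((sf n).dd j).dd j)
      simp only [e, Fin.sum_univ_three]
      rw [dd_add _ ((s 0).add (s 1)) (s 2), dd_add _ (s 0) (s 1)]
    rw [this]
    exact h2.2 i

/-- The phase `exp(i c x₁/2)`. -/
def phase (c : ℝ) (x : Ed 3) : ℂ := cexp (I * ((c / 2 * x 0 : ℝ) : ℂ))

lemma sm_phase (c : ℝ) : Sm (phase c) := by
  have h : Sm (fun x : Ed 3 => ((c / 2 * x 0 : ℝ) : ℂ)) :=
    ofRealCLM.contDiff.comp (by fun_prop : Sm (fun x : Ed 3 => c / 2 * x 0))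
  exact Complex.contDiff_exp.comp (contDiff_const.mul h)

lemma dd_phase (c : ℝ) (i : Fin 3) :
    dd i (phase c) = fun x => (I * (if i = 0 then (c / 2 : ℂ) else 0)) * phase c x := by
  funext x
  have hs : Sm (fun x : Ed 3 => c / 2 * x 0) := by fun_prop
  have h : Sm (fun x : Ed 3 => ((c / 2 * x 0 : ℝ) : ℂ)) := ofRealCLM.contDiff.comp hs
  have h2 : Sm (fun x : Ed 3 => I * ((c / 2 * x 0 : ℝ) : ℂ)) := contDiff_const.mul h
  have e : dd i (fun x : Ed 3 => I * ((c / 2 * x 0 : ℝ) : ℂ)) x =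
      I * (if i = 0 then (c / 2 : ℂ) else 0) := by
    simp only [dd_mul i contDiff_const h]
    have := congrFun (dd_clm ofRealCLM hs i) x
    simp only [ofRealCLM_apply] at this
    rw [this]
    simp only [dd_mul i contDiff_const (sm_coord 0)]
    simp only [dd_const, dd_coord]
    split_ifs <;> simp
  have := ((h2.diff x).hasFDerivAt.cexp).fderiv
  simp only [dd] at e ⊢
  change fderiv ℝ (fun x : Ed 3 => cexp (I * ((c / 2 * x 0 : ℝ) : ℂ))) x _ = _
  rw [this, ← e]
  simp [phase, mul_comm]

lemma norm_phase (c : ℝ) (x : Ed 3) : ‖phase c x‖ = 1 := by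
  rw [phase, mul_comm, norm_exp_ofReal_mul_I]

lemma phase_conj (c : ℝ) (x : Ed 3) : (starRingEnd ℂ) (phase c x) * phase c x = 1 := by
  rw [← normSq_eq_conj_mul_self, normSq_eq_norm_sq, norm_phase]; simp

lemma UB_phase {c : ι → ℝ} {C : ℝ} (hc : ∀ n, |c n| ≤ C) (k : ℕ) : UB k (fun n => phase (c n)) := by
  induction k with
  | zero => exact ⟨1, fun n x => (norm_phase _ _).le⟩
  | succ k ih =>
    refine ⟨⟨1, fun n x => (norm_phase _ _).le⟩, fun i => ?_⟩
    simp only [dd_phase]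
    refine UB.mul (fun n => contDiff_const) (fun n => sm_phase _) (UB.const (C := C) fun n => ?_) ih
    split_ifs
    · simp; have := hc n; linarith [abs_nonneg (c n)]
    · simp; exact (abs_nonneg _).trans (hc n)

/-- Elliptic regularity: bounded solutions have all derivatives bounded, uniformly
over a family with bounded speeds. In the gauge `exp(i c x₁/2) ψ` the equation has no
first order term, so that the Laplacian is bounded to the same order as the function and
`UB.of_lap` can be iterated. -/
lemma UB_of_GP {c : ι → ℝ} {C : ℝ} (hc : ∀ n, |c n| ≤ C) {ψ : ι → Ed 3 → ℂ}
    (hs : ∀ n, Sm (ψ n)) (hGP : ∀ n, GPeq (c n) (ψ n)) {M : ℝ} (hM : ∀ n x, ‖ψ n x‖ ≤ M) (k : ℕ) :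
    UB k ψ := by
  set V : ι → Ed 3 → ℂ := fun n x => phase (c n) x * ψ n x with hV
  have sV : ∀ n, Sm (V n) := fun n => (sm_phase _).mul (hs n)
  have hlap : (fun n x => ∑ j, dd j (dd j (V n)) x) =
      fun n x => (-(1 + (c n : ℂ) ^ 2 / 4)) * V n x + V n x * V n x * (starRingEnd ℂ) (V n x) := by
    funext n x
    have e1 : ∀ i, dd i (V n) = fun x => phase (c n) x *
        ((I * (if i = 0 then (c n / 2 : ℂ) else 0)) * ψ n x + dd i (ψ n) x) := by
      intro i
      rw [hV]
      simp only
      rw [dd_mul i (sm_phase _) (hs n), dd_phase]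
      funext x; ring
    have e2 : ∀ i, dd i (dd i (V n)) x = phase (c n) x *
        ((I * (if i = 0 then (c n / 2 : ℂ) else 0)) ^ 2 * ψ n x +
        2 * (I * (if i = 0 then (c n / 2 : ℂ) else 0)) * dd i (ψ n) x + dd i (dd i (ψ n)) x) := by
      intro i
      have s1 := hs n
      rw [e1, dd_mul i (sm_phase _) (by fun_prop), dd_phase]
      rw [dd_add i (by fun_prop) (by fun_prop), dd_mul i (by fun_prop) (by fun_prop)]
      simp only [dd_const]
      ring
    have e3 := hGP n x
    have e4 : lap (ψ n) x = ∑ j, dd j (dd j (ψ n)) x := rfl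
    have e5 : pd (ψ n) 0 x = dd 0 (ψ n) x := rfl
    rw [e4, e5] at e3
    have e6 : ((‖ψ n x‖ : ℂ)) ^ 2 = ψ n x * (starRingEnd ℂ) (ψ n x) := by
      rw [mul_conj, normSq_eq_norm_sq]; simp
    rw [e6] at e3
    simp only [e2]
    simp only [hV, Fin.sum_univ_three, map_mul, if_true, one_ne_zero, Fin.reduceEq, if_false] at e3 ⊢
    have e7 := phase_conj (c n) x
    have hI : I ^ 2 = -1 := I_sq
    linear_combination phase (c n) x * e3 + (c n ^ 2 / 4 * phase (c n) x * ψ n x) * hI -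
      phase (c n) x * ψ n x ^ 2 * (starRingEnd ℂ) (ψ n x) * e7
  have hUV : ∀ k, UB k V := by
    intro k
    induction k with
    | zero =>
      refine ⟨M, fun n x => ?_⟩
      simp only [hV, norm_mul, norm_phase, one_mul]
      exact hM n x
    | succ k ih =>
      refine UB.of_lap sV ih ?_
      rw [hlap]
      have b : ∀ n, ‖(-(1 + (c n : ℂ) ^ 2 / 4))‖ ≤ 1 + C ^ 2 / 4 := fun n => by
        rw [norm_neg]
        refine (norm_add_le _ _).trans ?_
        simp
        have := hc n
        rw [← sq_abs]; gcongr
      exact UB.add (fun n => contDiff_const.mul (sV n))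
        (fun n => ((sV n).mul (sV n)).mul (sm_conj (sV n)))
        (UB.mul (fun n => contDiff_const) sV (UB.const b) ih)
        (UB.mul (fun n => (sV n).mul (sV n)) (fun n => sm_conj (sV n)) (UB.mul sV sV ih ih)
          (UB.conj sV ih))
  have : ψ = fun n x => (starRingEnd ℂ) (phase (c n) x) * V n x := by
    funext n x
    simp only [hV]
    rw [← mul_assoc, phase_conj, one_mul]
  rw [this]
  exact UB.mul (fun n => sm_conj (sm_phase _)) sV (UB.conj (fun n => sm_phase _) (UB_phase hc k)) (hUV k)

end families

/-! ### Real form of the equation and the a priori sup bound -/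

/-- The pair `a = Re ψ`, `b = Im ψ` is a smooth solution with speed `c`, of finite energy and
tending to `1` at infinity. -/
structure TW (c : ℝ) (a b : Ed 3 → ℝ) : Prop where
  sa : Sm a
  sb : Sm b
  ea : ∀ x, ∑ i, dd i (dd i a) x = c * dd 0 b x - (1 - (a x ^ 2 + b x ^ 2)) * a x
  eb : ∀ x, ∑ i, dd i (dd i b) x = - c * dd 0 a x - (1 - (a x ^ 2 + b x ^ 2)) * b x
  ta : Tendsto a (cocompact (Ed 3)) (𝓝 1)
  tb : Tendsto b (cocompact (Ed 3)) (𝓝 0)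
  ie : Integrable (fun x => 1 / 2 * (∑ i, (dd i a x ^ 2 + dd i b x ^ 2)) +
      1 / 4 * (1 - (a x ^ 2 + b x ^ 2)) ^ 2)

lemma norm_sq_re_im (z : ℂ) : ‖z‖ ^ 2 = z.re ^ 2 + z.im ^ 2 := by
  rw [← normSq_eq_norm_sq, normSq_apply]; ring

lemma eDen_eq {ψ : Ed 3 → ℂ} (hs : Sm ψ) (x : Ed 3) :
    eDen ψ x = 1 / 2 * (∑ i, (dd i (fun x => (ψ x).re) x ^ 2 + dd i (fun x => (ψ x).im) x ^ 2)) +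
      1 / 4 * (1 - ((ψ x).re ^ 2 + (ψ x).im ^ 2)) ^ 2 := by
  simp only [eDen, gradSq, norm_sq_re_im, dd_re hs, dd_im hs]
  rfl

lemma TW.of_GP {c : ℝ} {ψ : Ed 3 → ℂ} (hs : Sm ψ) (hGP : GPeq c ψ) (hE : FiniteEnergy ψ)
    (hl : Tendsto ψ (cocompact (Ed 3)) (𝓝 1)) :
    TW c (fun x => (ψ x).re) (fun x => (ψ x).im) := by
  have key : ∀ x, (∑ j, dd j (dd j ψ) x).re = c * (dd 0 ψ x).im - (1 - ((ψ x).re ^ 2 + (ψ x).im ^ 2)) * (ψ x).re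
      ∧ (∑ j, dd j (dd j ψ) x).im = -c * (dd 0 ψ x).re - (1 - ((ψ x).re ^ 2 + (ψ x).im ^ 2)) * (ψ x).im := by
    intro x
    have e3 := hGP x
    have e4 : lap ψ x = ∑ j, dd j (dd j ψ) x := rfl
    have e5 : pd ψ 0 x = dd 0 ψ x := rfl
    rw [e4, e5] at e3
    have e6 : (1 - (‖ψ x‖ : ℂ) ^ 2) = ((1 - ((ψ x).re ^ 2 + (ψ x).im ^ 2) : ℝ) : ℂ) := by
      rw [← norm_sq_re_im]; push_cast; ring
    rw [e6] at e3
    have h1 := congrArg re e3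
    have h2 := congrArg im e3
    rw [add_re, add_re, re_ofReal_mul, mul_assoc, I_mul_re, im_ofReal_mul, zero_re] at h1
    rw [add_im, add_im, im_ofReal_mul, mul_assoc, I_mul_im, re_ofReal_mul, zero_im] at h2
    constructor <;> linarith
  refine ⟨sm_re hs, sm_im hs, fun x => ?_, fun x => ?_, ?_, ?_, ?_⟩
  · rw [dd_im hs, ← (key x).1, re_sum]
    refine Finset.sum_congr rfl fun j _ => ?_
    rw [dd_re hs, dd_re (hs.dd j)]
  · rw [dd_re hs, ← (key x).2, im_sum]
    refine Finset.sum_congr rfl fun j _ => ?_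
    rw [dd_im hs, dd_im (hs.dd j)]
  · simpa [Function.comp_def] using (continuous_re.tendsto (1:ℂ)).comp hl
  · simpa [Function.comp_def] using (continuous_im.tendsto (1:ℂ)).comp hl
  · exact hE.congr (Eventually.of_forall (eDen_eq hs))

/-- At a maximum of `|ψ|²` the equation forces `|ψ|² ≤ 1 + c²/4`. -/
lemma TW.sup_bound {c : ℝ} {a b : Ed 3 → ℝ} (h : TW c a b) (x : Ed 3) :
    a x ^ 2 + b x ^ 2 ≤ 1 + c ^ 2 / 4 := by
  by_contra! hx
  set f : Ed 3 → ℝ := fun x => a x ^ 2 + b x ^ 2 with hf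
  have sa := h.sa
  have sb := h.sb
  have hfs : Sm f := by simp only [hf]; fun_prop
  have hfx : 1 < f x := by have := sq_nonneg c; simp only [hf]; linarith
  have ht : Tendsto f (cocompact (Ed 3)) (𝓝 1) := by
    simpa using (h.ta.pow 2).add (h.tb.pow 2)
  obtain ⟨p, hp⟩ := hfs.continuous.exists_forall_ge' x ((ht.eventually_lt_const hfx).mono fun _ => le_of_lt)
  have hm : IsLocalMax f p := Eventually.of_forall hp
  have h1 := Finset.sum_nonpos (s := Finset.univ) fun i _ => dd_dd_nonpos_of_isLocalMax hfs hm i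
  have h2 : ∀ i, dd i (dd i f) p = 2 * (dd i a p ^ 2 + a p * dd i (dd i a) p
      + dd i b p ^ 2 + b p * dd i (dd i b) p) := by
    intro i
    simp only [hf]
    simp (disch := fun_prop) only [dd_add, dd_mul, dd_pow_two, dd_const]
    ring
  have h3 := h.ea p
  have h4 := h.eb p
  simp only [h2, Fin.sum_univ_three] at h1 h3 h4
  have hpx := hp x
  simp only [hf] at hpx
  have h5 : (a p ^ 2 + b p ^ 2) * (a p ^ 2 + b p ^ 2 - (1 + c ^ 2 / 4)) ≤ 0 := by
    have h7 := congrArg (fun t => a p * t) h3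
    have h8 := congrArg (fun t => b p * t) h4
    -- Completing the square in the first order term `c (a ∂₁b - b ∂₁a)` costs `c²|ψ|²/4`.
    nlinarith [sq_nonneg (c * a p / 2 + dd 0 b p), sq_nonneg (c * b p / 2 - dd 0 a p),
      sq_nonneg (dd 1 a p), sq_nonneg (dd 2 a p), sq_nonneg (dd 1 b p), sq_nonneg (dd 2 b p)]
  have h6 : 0 < a p ^ 2 + b p ^ 2 := by nlinarith [sq_nonneg c]
  nlinarith

/-! ### Compactness in the smooth local topology -/

/-- The sequence is uniformly Cauchy on every ball. -/
def LUC (f : ℕ → Ed 3 → ℂ) : Prop := ∀ R : ℝ, UniformCauchySeqOn f atTop (closedBall 0 R)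

/-- Landau's inequality: a first derivative is controlled by the size of the function and of the
second derivative. -/
lemma landau {h : Ed 3 → ℂ} (hs : Sm h) {M : ℝ} (i : Fin 3) (hM : ∀ x, ‖dd i (dd i h) x‖ ≤ M)
    (x : Ed 3) {t : ℝ} (ht : 0 < t) :
    ‖dd i h x‖ ≤ (‖h (x + t • EuclideanSpace.single i 1)‖ + ‖h x‖) / t + M * t := by
  have hM0 : 0 ≤ M := (norm_nonneg _).trans (hM x)
  have h1 : ∀ s ∈ Set.Icc 0 t, ‖dd i h (x + s • EuclideanSpace.single i 1) - dd i h x‖ ≤ M * t := by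
    intro s hs'
    have := (convex_Icc (0:ℝ) t).norm_image_sub_le_of_norm_hasDerivWithin_le
      (f := fun s : ℝ => dd i h (x + s • EuclideanSpace.single i 1)) (C := M)
      (fun s _ => (dd_line (hs.dd i) i x s).hasDerivWithinAt) (fun s _ => hM _)
      (Set.left_mem_Icc.2 ht.le) hs'
    simp only [zero_smul, add_zero, sub_zero] at this
    refine this.trans (mul_le_mul_of_nonneg_left ?_ hM0)
    rw [Real.norm_of_nonneg hs'.1]; exact hs'.2
  have h2 := (convex_Icc (0:ℝ) t).norm_image_sub_le_of_norm_hasDerivWithin_le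
      (f := fun s : ℝ => h (x + s • EuclideanSpace.single i 1) - s • dd i h x) (C := M * t)
      (fun s _ => ((dd_line hs i x s).sub ((hasDerivAt_id s).smul_const _)).hasDerivWithinAt)
      (fun s hs' => by simpa using h1 s hs')
      (Set.left_mem_Icc.2 ht.le) (Set.right_mem_Icc.2 ht.le)
  simp only [zero_smul, add_zero, sub_zero, Real.norm_of_nonneg ht.le] at h2
  have h3 : ‖t • dd i h x‖ ≤ ‖h (x + t • EuclideanSpace.single i 1)‖ + ‖h x‖ + M * t * t := by
    have e : t • dd i h x = (h (x + t • EuclideanSpace.single i 1) - h x) -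
      (h (x + t • EuclideanSpace.single i 1) - t • dd i h x - h x) := by abel
    rw [e]
    refine (norm_sub_le _ _).trans (add_le_add (norm_sub_le _ _) h2)
  rw [norm_smul, Real.norm_of_nonneg ht.le] at h3
  rw [div_add' _ _ _ ht.ne', le_div_iff₀ ht]
  linarith

/-- Locally uniform Cauchy sequences with bounded second derivatives have locally uniformly Cauchy
first derivatives, by `landau` applied to differences. -/
lemma LUC.deriv {f : ℕ → Ed 3 → ℂ} (hs : ∀ n, Sm (f n)) (hU : ∀ k, UB k f) (hL : LUC f) (i : Fin 3) :
    LUC (fun n => dd i (f n)) := by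
  obtain ⟨M, hM⟩ := (((hU 2).2 i).2 i).zero
  have hM0 : 0 ≤ M := (norm_nonneg _).trans (hM 0 0)
  intro R
  rw [Metric.uniformCauchySeqOn_iff]
  intro ε hε
  set t : ℝ := min 1 (ε / (4 * (M + 1))) with ht
  have ht0 : 0 < t := by positivity
  have ht1 : t ≤ 1 := min_le_left _ _
  have htM : 2 * M * t ≤ ε / 2 := by
    have : t ≤ ε / (4 * (M + 1)) := min_le_right _ _
    rw [le_div_iff₀ (by positivity)] at this
    nlinarith
  obtain ⟨N, hN⟩ := Metric.uniformCauchySeqOn_iff.1 (hL (R + 1)) (ε * t / 8) (by positivity)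
  refine ⟨N, fun m hm n hn x hx => ?_⟩
  have e1 : ∀ y, dd i (fun x => f m x - f n x) y = dd i (f m) y - dd i (f n) y := fun y => by
    rw [dd_sub i (hs m) (hs n)]
  have e2 : ∀ y, dd i (dd i (fun x => f m x - f n x)) y = dd i (dd i (f m)) y - dd i (dd i (f n)) y := fun y => by
    rw [dd_sub i (hs m) (hs n), dd_sub i ((hs m).dd i) ((hs n).dd i)]
  have h1 := landau ((hs m).sub (hs n)) (M := 2 * M) i (fun y => by
    rw [e2]; refine (norm_sub_le _ _).trans ?_
    linarith [hM m y, hM n y]) x ht0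
  rw [e1] at h1
  rw [mem_closedBall_zero_iff] at hx
  have h2 := hN m hm n hn x (by rw [mem_closedBall_zero_iff]; linarith)
  have h3 := hN m hm n hn (x + t • EuclideanSpace.single i 1) (by
    rw [mem_closedBall_zero_iff]
    refine (norm_add_le _ _).trans (add_le_add hx ?_)
    rw [norm_smul, Real.norm_of_nonneg ht0.le]; simpa using ht1)
  rw [dist_eq_norm] at h2 h3 ⊢
  refine h1.trans_lt ?_
  have : (‖f m (x + t • EuclideanSpace.single i 1) - f n (x + t • EuclideanSpace.single i 1)‖ +
    ‖f m x - f n x‖) / t < ε / 4 := by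
    rw [div_lt_iff₀ ht0]; nlinarith
  linarith

lemma fderiv_eq_sum {h : Ed 3 → ℂ} (x : Ed 3) :
    fderiv ℝ h x = ∑ i, (EuclideanSpace.proj i : Ed 3 →L[ℝ] ℝ).smulRight (dd i h x) := by
  ext v
  have : v = ∑ i, v i • (EuclideanSpace.single i 1 : Ed 3) := by
    ext k; simp [Fin.sum_univ_three]; fin_cases k <;> simp
  conv_lhs => rw [this]
  simp [dd]

lemma lim_deriv {f : ℕ → Ed 3 → ℂ} (hs : ∀ n, Sm (f n)) (hU : ∀ k, UB k f) (hL : LUC f)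
    {ψ : Ed 3 → ℂ} (hψ : ∀ x, Tendsto (fun n => f n x) atTop (𝓝 (ψ x))) :
    (∀ i x, Tendsto (fun n => dd i (f n) x) atTop (𝓝 (dd i ψ x))) ∧ Differentiable ℝ ψ := by
  have hL' := fun i => LUC.deriv hs hU hL i
  have hG : ∀ i x, ∃ g, Tendsto (fun n => dd i (f n) x) atTop (𝓝 g) := fun i x => by
    apply cauchySeq_tendsto_of_complete
    exact (hL' i ‖x‖).cauchySeq (by simp)
  choose G hG using hG
  have hd : ∀ x, HasFDerivAt ψ (∑ i, (EuclideanSpace.proj i : Ed 3 →L[ℝ] ℝ).smulRight (G i x)) x := by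
    intro x
    refine hasFDerivAt_of_tendstoUniformlyOnFilter (l := atTop) (f := f) (f' := fun n => fderiv ℝ (f n))
      (g' := fun x => ∑ i, (EuclideanSpace.proj i : Ed 3 →L[ℝ] ℝ).smulRight (G i x)) ?_ ?_ ?_
    · have hU : TendstoUniformlyOn (fun n => fderiv ℝ (f n))
        (fun x => ∑ i, (EuclideanSpace.proj i : Ed 3 →L[ℝ] ℝ).smulRight (G i x)) atTop
        (closedBall 0 (‖x‖ + 1)) := by
        have hGu : ∀ i, TendstoUniformlyOn (fun n => dd i (f n)) (G i) atTop (closedBall 0 (‖x‖ + 1)) :=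
          fun i => (hL' i _).tendstoUniformlyOn_of_tendsto fun y _ => hG i y
        rw [Metric.tendstoUniformlyOn_iff]
        intro ε hε
        have h := fun i => Metric.tendstoUniformlyOn_iff.1 (hGu i) (ε / 4) (by positivity)
        filter_upwards [h 0, h 1, h 2] with n h0 h1 h2 y hy
        rw [dist_eq_norm, fderiv_eq_sum, ← Finset.sum_sub_distrib]
        have hb : ∀ i, ‖(EuclideanSpace.proj i : Ed 3 →L[ℝ] ℝ).smulRight (G i y) -
          (EuclideanSpace.proj i : Ed 3 →L[ℝ] ℝ).smulRight (dd i (f n) y)‖ ≤ ‖G i y - dd i (f n) y‖ := by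
          intro i
          refine ContinuousLinearMap.opNorm_le_bound _ (norm_nonneg _) fun v => ?_
          simp only [sub_apply, ContinuousLinearMap.smulRight_apply, ← smul_sub,
            norm_smul, mul_comm ‖G i y - dd i (f n) y‖]
          gcongr
          exact PiLp.norm_apply_le v i
        refine (norm_sum_le _ _).trans_lt ?_
        have h0 := h0 y hy
        have h1 := h1 y hy
        have h2 := h2 y hy
        rw [dist_eq_norm] at h0 h1 h2
        rw [Fin.sum_univ_three]
        linarith [hb 0, hb 1, hb 2]
      refine (tendstoUniformlyOn_iff_tendstoUniformlyOnFilter.1 hU).mono_right ?_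
      rw [le_principal_iff]
      refine mem_of_superset (ball_mem_nhds x one_pos) fun y hy => ?_
      rw [mem_closedBall_zero_iff]
      rw [mem_ball, dist_eq_norm] at hy
      have := norm_add_le x (y - x)
      rw [add_sub_cancel] at this
      linarith
    · exact Eventually.of_forall fun p => ((hs p.1).diff _).hasFDerivAt
    · exact Eventually.of_forall hψ
  refine ⟨fun i x => ?_, fun x => (hd x).differentiableAt⟩
  have : dd i ψ x = G i x := by
    rw [dd, (hd x).fderiv]
    simp [Pi.single_apply]
  rw [this]; exact hG i x

lemma UB.all_dd {f : ℕ → Ed 3 → ℂ} (hU : ∀ k, UB k f) (i : Fin 3) : ∀ k, UB k (fun n => dd i (f n)) :=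
  fun k => (hU (k + 1)).2 i

lemma lim_contDiff (k : ℕ) : ∀ {f : ℕ → Ed 3 → ℂ}, (∀ n, Sm (f n)) → (∀ k, UB k f) → LUC f →
    ∀ {ψ : Ed 3 → ℂ}, (∀ x, Tendsto (fun n => f n x) atTop (𝓝 (ψ x))) → ContDiff ℝ k ψ := by
  induction k with
  | zero =>
    intro f hs hU hL ψ hψ
    exact contDiff_zero.2 (lim_deriv hs hU hL hψ).2.continuous
  | succ k ih =>
    intro f hs hU hL ψ hψ
    obtain ⟨h1, h2⟩ := lim_deriv hs hU hL hψ
    rw [show ((k + 1 : ℕ) : WithTop ℕ∞) = (k : WithTop ℕ∞) + 1 by push_cast; rfl,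
      contDiff_succ_iff_fderiv]
    refine ⟨h2, by simp, ?_⟩
    have : fderiv ℝ ψ = fun x => ∑ i, (EuclideanSpace.proj i : Ed 3 →L[ℝ] ℝ).smulRight (dd i ψ x) :=
      funext fderiv_eq_sum
    rw [this]
    refine ContDiff.sum fun i _ => ?_
    exact contDiff_const.smulRight (ih (fun n => (hs n).dd i) (UB.all_dd hU i) (LUC.deriv hs hU hL i) (h1 i))

lemma norm_iteratedFDeriv_succ_le_sum (k : ℕ) {h : Ed 3 → ℂ} (hs : Sm h) (x : Ed 3) :
    ‖iteratedFDeriv ℝ (k + 1) h x‖ ≤ ∑ i, ‖iteratedFDeriv ℝ k (dd i h) x‖ := by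
  rw [← norm_iteratedFDeriv_fderiv]
  have : fderiv ℝ h = fun x => ∑ i, (ContinuousLinearMap.smulRightL ℝ (Ed 3) ℂ
      (EuclideanSpace.proj i : Ed 3 →L[ℝ] ℝ)) (dd i h x) :=
    funext fderiv_eq_sum
  rw [this]
  have e := iteratedFDeriv_sum (𝕜 := ℝ) (i := k) (u := Finset.univ) (f := fun i x => (ContinuousLinearMap.smulRightL ℝ (Ed 3) ℂ
      (EuclideanSpace.proj i : Ed 3 →L[ℝ] ℝ)) (dd i h x)) (fun i _ => by
        exact (ContinuousLinearMap.contDiff _).comp ((hs.dd i).of_le (by exact_mod_cast le_top)))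
  rw [e]
  rw [Finset.sum_apply]
  refine (norm_sum_le _ _).trans (Finset.sum_le_sum fun i _ => ?_)
  refine (ContinuousLinearMap.norm_iteratedFDeriv_comp_left (n := k) (ContinuousLinearMap.smulRightL ℝ (Ed 3) ℂ
      (EuclideanSpace.proj i : Ed 3 →L[ℝ] ℝ)) (((hs.dd i).of_le (by exact_mod_cast le_top)).contDiffAt) le_rfl).trans ?_
  refine mul_le_of_le_one_left (norm_nonneg _) ?_
  refine ContinuousLinearMap.opNorm_le_bound _ zero_le_one fun v => ?_
  refine ContinuousLinearMap.opNorm_le_bound _ (by positivity) fun w => ?_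
  simp only [ContinuousLinearMap.smulRightL_apply_apply, ContinuousLinearMap.smulRight_apply, norm_smul, one_mul, mul_comm ‖v‖]
  gcongr
  exact PiLp.norm_apply_le w i

/-- Locally uniform convergence of the iterated derivative of order `k`. -/
lemma lim_iter (k : ℕ) : ∀ {f : ℕ → Ed 3 → ℂ}, (∀ n, Sm (f n)) → (∀ k, UB k f) → LUC f →
    ∀ {ψ : Ed 3 → ℂ}, Sm ψ → (∀ x, Tendsto (fun n => f n x) atTop (𝓝 (ψ x))) →
    ∀ R ε : ℝ, 0 < ε → ∀ᶠ n in atTop, ∀ x ∈ closedBall (0 : Ed 3) R,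
      ‖iteratedFDeriv ℝ k (fun x => ψ x - f n x) x‖ < ε := by
  induction k with
  | zero =>
    intro f hs hU hL ψ sψ hψ R ε hε
    have := (hL R).tendstoUniformlyOn_of_tendsto fun y _ => hψ y
    filter_upwards [Metric.tendstoUniformlyOn_iff.1 this ε hε] with n hn x hx
    rw [norm_iteratedFDeriv_zero, ← dist_eq_norm]
    exact hn x hx
  | succ k ih =>
    intro f hs hU hL ψ sψ hψ R ε hε
    obtain ⟨h1, h2⟩ := lim_deriv hs hU hL hψ
    have h := fun i => ih (fun n => (hs n).dd i) (UB.all_dd hU i) (LUC.deriv hs hU hL i) (sψ.dd i) (h1 i)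
      R (ε / 3) (by positivity)
    filter_upwards [h 0, h 1, h 2] with n h0 h1 h2 x hx
    refine (norm_iteratedFDeriv_succ_le_sum k (sψ.sub (hs n)) x).trans_lt ?_
    rw [Fin.sum_univ_three]
    simp only [dd_sub _ sψ (hs n)]
    linarith [h0 x hx, h1 x hx, h2 x hx]

/-- Uniformly bounded first derivatives give a uniform Lipschitz constant. -/
lemma lip_of_UB {f : ℕ → Ed 3 → ℂ} (hs : ∀ n, Sm (f n)) (hU : ∀ k, UB k f) :
    ∃ L, 0 ≤ L ∧ ∀ n x y, ‖f n x - f n y‖ ≤ L * ‖x - y‖ := by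
  choose C hC using fun i => ((hU 1).2 i)
  have hC0 : ∀ i, 0 ≤ C i := fun i => (norm_nonneg _).trans (hC i 0 0)
  refine ⟨∑ i, C i, Finset.sum_nonneg fun i _ => hC0 i, fun n x y => ?_⟩
  refine convex_univ.norm_image_sub_le_of_norm_fderiv_le (𝕜 := ℝ) (f := f n) (C := ∑ i, C i)
    (fun x _ => (hs n).diff x)
    (fun x _ => ?_) (Set.mem_univ _) (Set.mem_univ _)
  rw [fderiv_eq_sum]
  refine (norm_sum_le _ _).trans (Finset.sum_le_sum fun i _ => ?_)
  refine ContinuousLinearMap.opNorm_le_bound _ (hC0 i) fun v => ?_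
  simp only [ContinuousLinearMap.smulRight_apply, norm_smul, mul_comm (C i)]
  have := hC i n x
  gcongr
  exact PiLp.norm_apply_le v i

/-- Extraction of a locally uniformly Cauchy subsequence (Arzelà–Ascoli). -/
lemma exists_LUC {f : ℕ → Ed 3 → ℂ} (hs : ∀ n, Sm (f n)) (hU : ∀ k, UB k f) :
    ∃ φ : ℕ → ℕ, StrictMono φ ∧ LUC (fun n => f (φ n)) := by
  obtain ⟨M, hM⟩ := (hU 0)
  obtain ⟨L, hL0, hL⟩ := lip_of_UB hs hU
  set q := TopologicalSpace.denseSeq (Ed 3)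
  have hq : DenseRange q := TopologicalSpace.denseRange_denseSeq _
  have hcomp : IsCompact (Set.pi Set.univ fun _ : ℕ => closedBall (0 : ℂ) M) :=
    isCompact_univ_pi fun _ => isCompact_closedBall _ _
  obtain ⟨g, -, φ, hφ, hlim⟩ := hcomp.isSeqCompact (x := fun n k => f n (q k))
    (fun n k _ => by rw [mem_closedBall_zero_iff]; exact hM n _)
  refine ⟨φ, hφ, fun R => ?_⟩
  rw [tendsto_pi_nhds] at hlim
  rw [Metric.uniformCauchySeqOn_iff]
  intro ε hε
  set δ : ℝ := ε / (4 * (L + 1)) with hδ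
  have hδ0 : 0 < δ := by positivity
  have hcov : closedBall (0 : Ed 3) R ⊆ ⋃ k, ball (q k) δ := by
    intro x _
    obtain ⟨k, hk⟩ := hq.exists_dist_lt x hδ0
    exact Set.mem_iUnion.2 ⟨k, hk⟩
  obtain ⟨t, ht⟩ := (isCompact_closedBall (0 : Ed 3) R).elim_finite_subcover _ (fun _ => isOpen_ball) hcov
  have hev : ∀ᶠ n in atTop, ∀ k ∈ t, dist (f (φ n) (q k)) (g k) < ε / 4 := by
    rw [Filter.eventually_all_finset]
    intro k _
    exact Metric.tendsto_nhds.1 (hlim k) _ (by positivity)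
  obtain ⟨N, hN⟩ := eventually_atTop.1 hev
  refine ⟨N, fun m hm n hn x hx => ?_⟩
  obtain ⟨k, hk, hxk⟩ := Set.mem_iUnion₂.1 (ht hx)
  rw [mem_ball] at hxk
  have h1 := hN m hm k hk
  have h2 := hN n hn k hk
  have h3 : ∀ n, dist (f n x) (f n (q k)) < ε / 4 := fun n => by
    rw [dist_eq_norm] at hxk ⊢
    refine (hL n _ _).trans_lt ?_
    have : L * ‖x - q k‖ ≤ L * δ := by gcongr
    have : (L + 1) * δ = ε / 4 := by rw [hδ]; field_simp
    linarith
  calc dist (f (φ m) x) (f (φ n) x)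
      ≤ dist (f (φ m) x) (f (φ m) (q k)) + dist (f (φ m) (q k)) (g k) +
        (dist (f (φ n) (q k)) (g k) + dist (f (φ n) x) (f (φ n) (q k))) := by
        have e1 := dist_triangle4 (f (φ m) x) (f (φ m) (q k)) (g k) (f (φ n) x)
        have e2 := dist_triangle (g k) (f (φ n) (q k)) (f (φ n) x)
        have e3 := dist_comm (g k) (f (φ n) (q k))
        have e4 := dist_comm (f (φ n) (q k)) (f (φ n) x)
        linarith
    _ < ε := by linarith [h3 (φ m), h3 (φ n)]

/-- Compactness: a sequence of smooth functions with all derivatives uniformly bounded has a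
subsequence converging smoothly on compact sets. -/
lemma montel {f : ℕ → Ed 3 → ℂ} (hs : ∀ n, Sm (f n)) (hU : ∀ k, UB k f) :
    ∃ φ : ℕ → ℕ, StrictMono φ ∧ ∃ ψ : Ed 3 → ℂ, Sm ψ ∧
      (∀ x, Tendsto (fun n => f (φ n) x) atTop (𝓝 (ψ x))) ∧
      (∀ i x, Tendsto (fun n => dd i (f (φ n)) x) atTop (𝓝 (dd i ψ x))) ∧
      (∀ i x, Tendsto (fun n => dd i (dd i (f (φ n))) x) atTop (𝓝 (dd i (dd i ψ) x))) ∧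
      LocCk (fun n => f (φ n)) ψ := by
  obtain ⟨φ, hφ, hL⟩ := exists_LUC hs hU
  have hU' : ∀ k, UB k (fun n => f (φ n)) := by
    have : ∀ k, ∀ f : ℕ → Ed 3 → ℂ, UB k f → UB k (fun n => f (φ n)) := by
      intro k
      induction k with
      | zero => exact fun f ⟨C, h⟩ => ⟨C, fun n => h _⟩
      | succ k ih => exact fun f h => ⟨h.1.imp fun C h n => h _, fun i => ih _ (h.2 i)⟩
    exact fun k => this k f (hU k)
  have hs' := fun n => hs (φ n)
  have hlim : ∀ x, ∃ z, Tendsto (fun n => f (φ n) x) atTop (𝓝 z) := fun x =>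
    cauchySeq_tendsto_of_complete ((hL ‖x‖).cauchySeq (by simp))
  choose ψ hψ using hlim
  have sψ : Sm ψ := contDiff_infty.2 fun k => lim_contDiff k hs' hU' hL hψ
  have h1 := (lim_deriv hs' hU' hL hψ).1
  refine ⟨φ, hφ, ψ, sψ, hψ, h1, fun i => (lim_deriv (fun n => (hs' n).dd i) (UB.all_dd hU' i)
    (LUC.deriv hs' hU' hL i) (h1 i)).1 i, fun k K hK => ?_⟩
  obtain ⟨R, hR⟩ := hK.isBounded.subset_closedBall 0
  rw [Metric.tendstoUniformlyOn_iff]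
  intro ε hε
  filter_upwards [lim_iter k hs' hU' hL sψ hψ R ε hε] with n hn x hx
  have := hn x (hR hx)
  have c1 : ContDiffAt ℝ k ψ x := (sψ.of_le (by exact_mod_cast le_top)).contDiffAt
  have c2 : ContDiffAt ℝ k (f (φ n)) x := ((hs' n).of_le (by exact_mod_cast le_top)).contDiffAt
  rw [dist_eq_norm, ← iteratedFDeriv_sub_apply c1 c2]
  exact this

/-! ### Integration by parts with linearly growing multipliers -/

lemma dd_eq_zero_of_eventually {f : Ed 3 → ℝ} {k : ℝ} {x : Ed 3} (h : ∀ᶠ y in 𝓝 x, f y = k) (i : Fin 3) :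
    dd i f x = 0 := by
  have : f =ᶠ[𝓝 x] fun _ => k := h
  simp [dd, this.fderiv_eq]

/-- A cutoff function equal to `1` on the unit ball. -/
lemma exists_cutoff : ∃ χ : Ed 3 → ℝ, Sm χ ∧ HasCompactSupport χ ∧
    (∀ x, ‖x‖ < 1 → χ x = 1) ∧ (∀ x, 2 ≤ ‖x‖ → χ x = 0) ∧ (∀ x, |χ x| ≤ 1) ∧
    ∃ K, 0 ≤ K ∧ ∀ i x, |dd i χ x| ≤ K := by
  let f : ContDiffBump (0 : Ed 3) := ⟨1, 2, one_pos, one_lt_two⟩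
  have hs : Sm (f : Ed 3 → ℝ) := f.contDiff
  refine ⟨f, hs, f.hasCompactSupport, fun x hx => ?_, fun x hx => ?_, fun x => ?_, ?_⟩
  · exact f.one_of_mem_closedBall (by simpa using hx.le)
  · exact f.zero_of_le_dist (by simpa using hx)
  · rw [abs_le]; exact ⟨by linarith [f.nonneg (x := x)], f.le_one⟩
  · have : ∀ i, ∃ K, ∀ x, |dd i f x| ≤ K := fun i =>
      (hs.dd i).continuous.bounded_above_of_compact_support
        (f.hasCompactSupport.fderiv_apply (𝕜 := ℝ) _)
    choose K hK using this
    refine ⟨∑ i, |K i|, by positivity, fun i x => (hK i x).trans ((le_abs_self _).trans ?_)⟩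
    exact Finset.single_le_sum (f := fun i => |K i|) (fun i _ => abs_nonneg _) (Finset.mem_univ i)

lemma integral_div_compact {W F : Ed 3 → ℝ} (sW : Sm W) (hW : HasCompactSupport W) (sF : Sm F)
    (i : Fin 3) : Integrable (fun x => dd i W x * F x) ∧ Integrable (fun x => W x * dd i F x) ∧
    ∫ x, (dd i W x * F x + W x * dd i F x) = 0 := by
  have hdW : HasCompactSupport (dd i W) := hW.fderiv_apply (𝕜 := ℝ) _
  have i1 : Integrable (fun x => dd i W x * F x) :=
    ((sW.dd i).continuous.mul sF.continuous).integrable_of_hasCompactSupport hdW.mul_right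
  have i2 : Integrable (fun x => W x * dd i F x) :=
    (sW.continuous.mul (sF.dd i).continuous).integrable_of_hasCompactSupport hW.mul_right
  have i3 : Integrable (fun x => W x * F x) :=
    (sW.continuous.mul sF.continuous).integrable_of_hasCompactSupport hW.mul_right
  refine ⟨i1, i2, ?_⟩
  rw [integral_add i1 i2]
  have := integral_mul_fderiv_eq_neg_fderiv_mul_of_integrable (μ := volume) (f := W) (g := F)
    (v := EuclideanSpace.single i 1) i1 i2 i3 (fun x _ => sW.diff x) (fun x _ => sF.diff x)
  simp only [dd]
  rw [this]; ring

/-- Divergence theorem on `ℝ³` for `X F`, with `F` an integrable field and `X` a multiplier of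
at most linear growth: the cutoff error `X ∂χ_R` stays bounded. -/
lemma div_thm {X : Ed 3 → ℝ} {F : Fin 3 → Ed 3 → ℝ} (sX : Sm X) (sF : ∀ l, Sm (F l))
    (iF : ∀ l, Integrable (F l)) (bX : ∃ K, ∀ x, |X x| ≤ K * (1 + ‖x‖))
    (iD : Integrable (fun x => ∑ l, dd l X x * F l x + X x * ∑ l, dd l (F l) x)) :
    ∫ x, (∑ l, dd l X x * F l x + X x * ∑ l, dd l (F l) x) = 0 := by
  obtain ⟨χ, sχ, cχ, χ1, χ0, χb, K, hK0, hK⟩ := exists_cutoff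
  obtain ⟨K', hK'⟩ := bX
  have hK'0 : 0 ≤ K' := by simpa using (abs_nonneg _).trans (hK' 0)
  set D : Ed 3 → ℝ := fun x => ∑ l, dd l X x * F l x + X x * ∑ l, dd l (F l) x with hD
  let R : ℕ → ℝ := fun n => n + 1
  have hR : ∀ n, 1 ≤ R n := fun n => by simp [R]
  let L : ℕ → Ed 3 →L[ℝ] Ed 3 := fun n => (R n)⁻¹ • ContinuousLinearMap.id ℝ (Ed 3)
  have hL : ∀ n x, L n x = (R n)⁻¹ • x := fun n x => by simp [L]
  let χn : ℕ → Ed 3 → ℝ := fun n x => χ (0 + L n x)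
  have sχn : ∀ n, Sm (χn n) := fun n => sχ.comp (contDiff_const.add (L n).contDiff)
  have dχn : ∀ n l x, dd l (χn n) x = (R n)⁻¹ * dd l χ (0 + L n x) := fun n l x => by
    exact congrFun (dd_affine sχ (L n) 0 l (s := (R n)⁻¹) (hL n _)) x
  have χn0 : ∀ n x, 2 * R n ≤ ‖x‖ → χn n x = 0 := fun n x hx => by
    apply χ0
    have := hR n
    rw [zero_add, hL, norm_smul, Real.norm_of_nonneg (by positivity), inv_mul_eq_div,
      le_div_iff₀ (by linarith)]
    exact hx
  have χn1 : ∀ n x, ‖x‖ < R n → χn n x = 1 := fun n x hx => by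
    apply χ1
    have := hR n
    rw [zero_add, hL, norm_smul, Real.norm_of_nonneg (by positivity), inv_mul_eq_div,
      div_lt_one (by linarith)]
    exact hx
  have cχn : ∀ n, HasCompactSupport (χn n) := fun n => by
    refine HasCompactSupport.intro (isCompact_closedBall (0 : Ed 3) (2 * R n)) fun x hx => χn0 n x ?_
    simp at hx; exact hx.le
  have dχn0 : ∀ n l x, 2 * R n < ‖x‖ → dd l (χn n) x = 0 := fun n l x hx => by
    refine dd_eq_zero_of_eventually (k := 0) ?_ l
    filter_upwards [continuous_norm.continuousAt.eventually (lt_mem_nhds hx)] with y hy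
    exact χn0 n y hy.le
  have dχn1 : ∀ n l x, ‖x‖ < R n → dd l (χn n) x = 0 := fun n l x hx => by
    refine dd_eq_zero_of_eventually (k := 1) ?_ l
    filter_upwards [continuous_norm.continuousAt.eventually (gt_mem_nhds hx)] with y hy
    exact χn1 n y hy
  have z : ∀ n, ∫ x, (χn n x * D x + X x * ∑ l, dd l (χn n) x * F l x) = 0 := by
    intro n
    have sn := sχn n
    have cW : HasCompactSupport (fun x => χn n x * X x) := (cχn n).mul_right
    have sW : Sm (fun x => χn n x * X x) := by fun_prop
    have h := fun l => integral_div_compact sW cW (sF l) l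
    have e : ∀ x, χn n x * D x + X x * ∑ l, dd l (χn n) x * F l x =
        ∑ l, (dd l (fun x => χn n x * X x) x * F l x + χn n x * X x * dd l (F l) x) := by
      intro x
      simp only [hD, fun l => dd_mul l sn sX, Fin.sum_univ_three]
      ring
    simp only [e]
    rw [integral_finsetSum _ fun l _ => by exact (h l).1.add (h l).2.1]
    exact Finset.sum_eq_zero fun l _ => (h l).2.2
  -- Since `∂χ_R` lives on `R ≤ ‖x‖ ≤ 2R`, the error `X ∂χ_R F` is dominated by a multiple of `|F|`.
  have lim : Tendsto (fun n => ∫ x, (χn n x * D x + X x * ∑ l, dd l (χn n) x * F l x)) atTop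
      (𝓝 (∫ x, D x)) := by
    refine tendsto_integral_of_dominated_convergence
      (fun x => |D x| + 3 * K' * K * ∑ l, |F l x|) (fun n => ?_) ?_ (fun n => ?_) ?_
    · have sn := sχn n
      have : Continuous (fun x => X x * ∑ l, dd l (χn n) x * F l x) :=
        sX.continuous.mul (continuous_finset_sum _ fun l _ =>
          ((sn.dd l).continuous.mul (sF l).continuous))
      exact (sn.continuous.aestronglyMeasurable.mul iD.1).add this.aestronglyMeasurable
    · exact iD.abs.add ((integrable_finset_sum _ fun l _ => (iF l).abs).const_mul _)
    · refine Eventually.of_forall fun x => ?_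
      refine (norm_add_le _ _).trans (add_le_add ?_ ?_)
      · rw [norm_mul, Real.norm_eq_abs, Real.norm_eq_abs]
        exact mul_le_of_le_one_left (abs_nonneg _) (χb _)
      · rw [Finset.mul_sum, Finset.mul_sum]
        refine (norm_sum_le _ _).trans (Finset.sum_le_sum fun l _ => ?_)
        rw [← mul_assoc, norm_mul]
        refine mul_le_mul_of_nonneg_right ?_ (abs_nonneg _)
        by_cases hx : 2 * R n < ‖x‖
        · rw [dχn0 n l x hx]; simp; positivity
        · have h0 : ‖(R n)⁻¹‖ = (R n)⁻¹ := Real.norm_of_nonneg (by have := hR n; positivity)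
          rw [dχn, norm_mul, norm_mul, h0]
          have h1 := hK' x
          have h2 := hK l (0 + L n x)
          have h3 : 1 + ‖x‖ ≤ 3 * R n := by linarith [hR n]
          calc ‖X x‖ * ((R n)⁻¹ * ‖dd l χ (0 + L n x)‖) ≤ (K' * (3 * R n)) * ((R n)⁻¹ * K) := by
                have := hR n
                have h4 : ‖X x‖ ≤ K' * (3 * R n) := h1.trans (by gcongr)
                have h5 : ‖dd l χ (0 + L n x)‖ ≤ K := h2
                gcongr
            _ = 3 * K' * K := by have : R n ≠ 0 := by linarith [hR n]
                                 field_simp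
    · refine Eventually.of_forall fun x => ?_
      refine tendsto_const_nhds.congr' ?_
      obtain ⟨N, hN⟩ := exists_nat_gt ‖x‖
      filter_upwards [eventually_ge_atTop N] with n hn
      have hx : ‖x‖ < R n := by
        have : (N : ℝ) ≤ n := by exact_mod_cast hn
        simp only [R]; linarith
      simp [χn1 n x hx, fun l => dχn1 n l x hx]
  exact tendsto_nhds_unique lim (by simp only [z]; exact tendsto_const_nhds)

lemma tendsto_line (x v : Ed 3) (hv : ‖v‖ = 1) :
    Tendsto (fun t : ℝ => x + t • v) (cocompact ℝ) (cocompact (Ed 3)) := by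
  rw [← Metric.cobounded_eq_cocompact (α := Ed 3), ← tendsto_norm_atTop_iff_cobounded]
  refine tendsto_atTop_mono (f := fun t : ℝ => ‖t‖ - ‖x‖) (fun t => ?_)
    (tendsto_atTop_add_const_right _ _ (tendsto_norm_cocompact_atTop))
  have h := norm_sub_norm_le (t • v) (-x)
  rw [norm_smul, hv, norm_neg, mul_one, sub_neg_eq_add, add_comm (t • v)] at h
  exact h

/-- A function vanishing at infinity whose derivative along `x₁` is integrable has a derivative
of mean zero. -/
lemma integral_dd_zero {w : Ed 3 → ℝ} (sw : Sm w) (hw : Tendsto w (cocompact (Ed 3)) (𝓝 0))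
    (hi : Integrable (dd 0 w)) : ∫ x, dd 0 w x = 0 := by
  let e1 := (MeasurableEquiv.piFinSuccAbove (fun _ : Fin 3 => ℝ) 0).symm
  have m1 : MeasurePreserving e1 := (volume_preserving_piFinSuccAbove (fun _ : Fin 3 => ℝ) 0).symm _
  let e2 := (MeasurableEquiv.toLp 2 (Fin 3 → ℝ))
  have m2 : MeasurePreserving e2 := (EuclideanSpace.volume_preserving_symm_measurableEquiv_toLp (Fin 3)).symm
  have m : MeasurePreserving (e1.trans e2) := m2.comp m1
  have hline : ∀ y : Fin 2 → ℝ, ∃ P : Ed 3, ∀ t : ℝ, (e1.trans e2) (t, y) =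
      P + t • EuclideanSpace.single 0 1 := by
    intro y
    refine ⟨(e1.trans e2) (0, y), fun t => ?_⟩
    ext k
    fin_cases k <;> simp [e1, e2, MeasurableEquiv.piFinSuccAbove_symm_apply, Fin.insertNthEquiv]
    rfl
  have hi' : Integrable (fun p : ℝ × (Fin 2 → ℝ) => dd 0 w ((e1.trans e2) p)) :=
    (m.integrable_comp_emb (e1.trans e2).measurableEmbedding).2 hi
  rw [← m.integral_comp' (g := dd 0 w), Measure.volume_eq_prod, integral_prod_symm _ hi']
  refine integral_eq_zero_of_ae ?_
  filter_upwards [hi'.prod_left_ae] with y hy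
  obtain ⟨P, hP⟩ := hline y
  have ht := (hw.comp (tendsto_line P (EuclideanSpace.single 0 1) (by simp)))
  rw [cocompact_eq_atBot_atTop] at ht
  simp only [hP] at hy ⊢
  have := integral_of_hasDerivAt_of_tendsto (fun t => dd_line sw 0 _ t) hy
    (ht.mono_left le_sup_left) (ht.mono_left le_sup_right)
  simpa using this

/-! ### Energy density, stress tensor and corrected currents -/

/-- The defect `1 - |ψ|²`. -/
def dfc (a b : Ed 3 → ℝ) (x : Ed 3) : ℝ := 1 - (a x ^ 2 + b x ^ 2)

/-- The stress tensor `⟨∂ₖψ, ∂ₗψ⟩`. -/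
def str (a b : Ed 3 → ℝ) (k l : Fin 3) (x : Ed 3) : ℝ := dd k a x * dd l a x + dd k b x * dd l b x

/-- The energy density. -/
def den (a b : Ed 3 → ℝ) (x : Ed 3) : ℝ :=
  1 / 2 * (str a b 0 0 x + str a b 1 1 x + str a b 2 2 x) + 1 / 4 * dfc a b x ^ 2

/-- A smooth function on `ℝ` equal to `s⁻¹` for `s ≥ 1/2`. -/
def minv (s : ℝ) : ℝ :=
  (s * Real.smoothTransition (4 * s - 1) + (1 - Real.smoothTransition (4 * s - 1)))⁻¹

lemma sm_minv : ContDiff ℝ (⊤ : ℕ∞) minv := by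
  have h : ContDiff ℝ (⊤ : ℕ∞) (fun s : ℝ => Real.smoothTransition (4 * s - 1)) :=
    Real.smoothTransition.contDiff.comp (by fun_prop)
  refine ContDiff.inv (by fun_prop) fun s => ?_
  have h0 := Real.smoothTransition.nonneg (4 * s - 1)
  have h1 := Real.smoothTransition.le_one (4 * s - 1)
  rcases le_or_gt s (1 / 4) with hs | hs
  · rw [Real.smoothTransition.zero_of_nonpos (by linarith)]; norm_num
  · have : 0 < s * Real.smoothTransition (4 * s - 1) + (1 - Real.smoothTransition (4 * s - 1)) := by
      nlinarith
    exact this.ne'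

lemma minv_eq {s : ℝ} (hs : 1 / 2 < s) : minv s = s⁻¹ := by
  rw [minv, Real.smoothTransition.one_of_one_le (by linarith)]; simp

lemma deriv_minv {s : ℝ} (hs : 1 / 2 < s) : deriv minv s = -(s ^ 2)⁻¹ := by
  have : minv =ᶠ[𝓝 s] fun s => s⁻¹ := by
    filter_upwards [lt_mem_nhds hs] with t ht using minv_eq ht
  rw [this.deriv_eq, deriv_inv]

/-- An angle function for `ψ = a + i b` where `a > 1/2`, in particular near infinity, extended
smoothly to the whole space. -/
def ang (a b : Ed 3 → ℝ) (x : Ed 3) : ℝ := Real.arctan (b x * minv (a x))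

/-- The momentum density corrected by a gradient: its curl is that of the momentum density
everywhere, and it is bounded by the energy density near infinity. -/
def curA (a b : Ed 3 → ℝ) (i : Fin 3) (x : Ed 3) : ℝ :=
  a x * dd i b x - b x * dd i a x - dd i (ang a b) x

/-- The momentum density multiplied by `1 - |ψ|⁻²` (regularised near the zeros of `ψ`): it is
controlled by the energy density with a sharp constant, but it is known to have the same curl as
the momentum density only where `|ψ|² > 1/2`. -/
def curB (a b : Ed 3 → ℝ) (i : Fin 3) (x : Ed 3) : ℝ :=
  (1 - minv (a x ^ 2 + b x ^ 2)) * (a x * dd i b x - b x * dd i a x)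

section
variable {a b : Ed 3 → ℝ}

lemma sm_dfc (sa : Sm a) (sb : Sm b) : Sm (dfc a b) := by
  unfold dfc; fun_prop

lemma sm_str (sa : Sm a) (sb : Sm b) (k l : Fin 3) : Sm (str a b k l) := by
  unfold str; fun_prop

lemma sm_den (sa : Sm a) (sb : Sm b) : Sm (den a b) := by
  have h1 := sm_dfc sa sb
  have h2 := sm_str sa sb
  have := h2 0 0; have := h2 1 1; have := h2 2 2
  unfold den; fun_prop

lemma sm_minv_comp {f : Ed 3 → ℝ} (sf : Sm f) : Sm (fun x => minv (f x)) := sm_minv.comp sf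

lemma sm_arctan : ContDiff ℝ (⊤ : ℕ∞) Real.arctan := Real.contDiff_arctan

lemma sm_ang (sa : Sm a) (sb : Sm b) : Sm (ang a b) := by
  have h := sm_minv_comp sa
  exact sm_arctan.comp (sb.mul h)

lemma sm_curA (sa : Sm a) (sb : Sm b) (i : Fin 3) : Sm (curA a b i) := by
  have := sm_ang sa sb
  unfold curA; fun_prop

lemma sm_curB (sa : Sm a) (sb : Sm b) (i : Fin 3) : Sm (curB a b i) := by
  have := sm_minv_comp (f := fun x => a x ^ 2 + b x ^ 2) (by fun_prop)
  unfold curB; fun_prop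

lemma dd_ang (sa : Sm a) (sb : Sm b) (i : Fin 3) (x : Ed 3) (hx : 1 / 2 < a x) :
    dd i (ang a b) x = (a x * dd i b x - b x * dd i a x) / (a x ^ 2 + b x ^ 2) := by
  have h := sm_minv_comp sa
  have e := congrFun (dd_comp sm_arctan (sb.mul h) i) x
  rw [show ang a b = fun x => Real.arctan (b x * minv (a x)) from rfl, e,
    dd_mul i sb h, dd_comp sm_minv sa]
  simp only [minv_eq hx, deriv_minv hx, Real.deriv_arctan]
  have : 0 < a x := by linarith
  have : 0 < a x ^ 2 + b x ^ 2 := by positivity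
  field_simp
  ring

/-- Near infinity the two corrected densities agree. -/
lemma curA_eq (sa : Sm a) (sb : Sm b) (i : Fin 3) (x : Ed 3) (hx : 1 / 2 < a x) :
    curA a b i x = (1 - (a x ^ 2 + b x ^ 2)⁻¹) * (a x * dd i b x - b x * dd i a x) := by
  rw [curA, dd_ang sa sb i x hx]
  ring

lemma curl_curA (sa : Sm a) (sb : Sm b) (i k : Fin 3) (x : Ed 3) :
    dd i (curA a b k) x - dd k (curA a b i) x = 2 * (dd i a x * dd k b x - dd i b x * dd k a x) := by
  have h := sm_ang sa sb
  have e : ∀ i k, dd i (curA a b k) x = dd i a x * dd k b x + a x * dd i (dd k b) x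
      - (dd i b x * dd k a x + b x * dd i (dd k a) x) - dd i (dd k (ang a b)) x := fun i k => by
    unfold curA
    simp (disch := fun_prop) only [dd_add, dd_mul, dd_sub]
  rw [e, e, dd_comm sa i k, dd_comm sb i k, dd_comm h i k]
  ring

lemma curl_curB (sa : Sm a) (sb : Sm b) (i k : Fin 3) (x : Ed 3) (hx : 1 / 2 < a x ^ 2 + b x ^ 2) :
    dd i (curB a b k) x - dd k (curB a b i) x = 2 * (dd i a x * dd k b x - dd i b x * dd k a x) := by
  have hs : Sm (fun x => a x ^ 2 + b x ^ 2) := by fun_prop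
  have h := sm_minv_comp hs
  have e : ∀ i k, dd i (curB a b k) x =
      -(deriv minv (a x ^ 2 + b x ^ 2) * (2 * a x * dd i a x + 2 * b x * dd i b x)) *
        (a x * dd k b x - b x * dd k a x)
      + (1 - minv (a x ^ 2 + b x ^ 2)) *
       (dd i a x * dd k b x + a x * dd i (dd k b) x
      - (dd i b x * dd k a x + b x * dd i (dd k a) x)) := fun i k => by
    unfold curB
    rw [dd_mul i (by fun_prop) (by fun_prop), dd_sub i (by fun_prop) (by fun_prop),
      dd_comp sm_minv hs]
    simp (disch := fun_prop) only [dd_add, dd_mul, dd_sub, dd_const, dd_pow_two]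
    ring
  rw [e, e, dd_comm sa i k, dd_comm sb i k]
  simp only [minv_eq hx, deriv_minv hx]
  have : 0 < a x ^ 2 + b x ^ 2 := by linarith
  field_simp
  ring

/-- With `s = |ψ|²`, `P` the momentum density and `T = |∂ψ|²`, this bounds the corrected
momentum density by the energy density. -/
lemma cur_bound {s P T : ℝ} (hs : 1 / 2 < s) (hP : P ^ 2 ≤ s * T) :
    |(1 - s⁻¹) * P| ≤ (1 - s) ^ 2 + T := by
  have hs0 : 0 < s := by linarith
  have hT : 0 ≤ T := by
    by_contra! h
    nlinarith [sq_nonneg P]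
  refine abs_le_of_sq_le_sq ?_ (by positivity)
  have e : ((1 - s⁻¹) * P) ^ 2 = (1 - s) ^ 2 * (P ^ 2 / s ^ 2) := by field_simp; ring
  have h1 : P ^ 2 / s ^ 2 ≤ 2 * T := by
    rw [div_le_iff₀ (by positivity)]
    nlinarith [mul_nonneg hs0.le hT]
  rw [e]
  nlinarith [mul_le_mul_of_nonneg_left h1 (sq_nonneg (1 - s)), sq_nonneg ((1 - s) ^ 2), sq_nonneg T]

/-- The momentum density satisfies `⟨iψ, ∂ψ⟩² ≤ |ψ|² |∂ψ|²`. -/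
lemma lagrange_id (p q u v : ℝ) : (p * v - q * u) ^ 2 ≤ (p ^ 2 + q ^ 2) * (u * u + v * v) := by
  nlinarith [sq_nonneg (p * u + q * v)]

lemma str_nonneg (k : Fin 3) (x : Ed 3) : 0 ≤ str a b k k x :=
  add_nonneg (mul_self_nonneg _) (mul_self_nonneg _)

lemma den_nonneg (x : Ed 3) : 0 ≤ den a b x := by
  have := str_nonneg (a := a) (b := b) 0 x
  have := str_nonneg (a := a) (b := b) 1 x
  have := str_nonneg (a := a) (b := b) 2 x
  unfold den; positivity

lemma str_le_den (k : Fin 3) (x : Ed 3) : str a b k k x ≤ 2 * den a b x := by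
  have h0 := str_nonneg (a := a) (b := b) 0 x
  have h1 := str_nonneg (a := a) (b := b) 1 x
  have h2 := str_nonneg (a := a) (b := b) 2 x
  have h3 := sq_nonneg (dfc a b x)
  unfold den
  fin_cases k <;> simp <;> linarith

lemma dfc_le_den (x : Ed 3) : dfc a b x ^ 2 ≤ 4 * den a b x := by
  have h0 := str_nonneg (a := a) (b := b) 0 x
  have h1 := str_nonneg (a := a) (b := b) 1 x
  have h2 := str_nonneg (a := a) (b := b) 2 x
  unfold den
  linarith

lemma abs_str_le (k l : Fin 3) (x : Ed 3) :
    |str a b k l x| ≤ 1 / 2 * (str a b k k x + str a b l l x) := by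
  unfold str
  rw [abs_le]
  constructor
  · nlinarith [sq_nonneg (dd k a x + dd l a x), sq_nonneg (dd k b x + dd l b x)]
  · nlinarith [sq_nonneg (dd k a x - dd l a x), sq_nonneg (dd k b x - dd l b x)]

end

namespace TW
variable {a b : Ed 3 → ℝ} {c : ℝ} (h : TW c a b)
include h

lemma int_den : Integrable (den a b) := by
  refine h.ie.congr (Eventually.of_forall fun x => ?_)
  simp only [den, str, dfc, Fin.sum_univ_three]
  ring

lemma int_of_le {f : Ed 3 → ℝ} (sf : Continuous f) (K : ℝ) (hf : ∀ x, |f x| ≤ K * den a b x) :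
    Integrable f :=
  (h.int_den.const_mul K).mono' sf.aestronglyMeasurable (Eventually.of_forall hf)

lemma int_str (k l : Fin 3) : Integrable (str a b k l) :=
  h.int_of_le (sm_str h.sa h.sb k l).continuous 2 fun x => by
    have := abs_str_le (a := a) (b := b) k l x
    have := str_le_den (a := a) (b := b) k x
    have := str_le_den (a := a) (b := b) l x
    linarith

lemma int_dfc : Integrable (fun x => dfc a b x ^ 2) :=
  h.int_of_le ((sm_dfc h.sa h.sb).continuous.pow 2) 4 fun x => by
    rw [abs_of_nonneg (sq_nonneg _)]; exact dfc_le_den x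

/-- A smooth function that agrees with the corrected momentum density near infinity is integrable. -/
lemma int_of_cur {f : Ed 3 → ℝ} (sf : Sm f) (i : Fin 3)
    (hf : ∀ x, 1 / 2 < a x → f x = (1 - (a x ^ 2 + b x ^ 2)⁻¹) * (a x * dd i b x - b x * dd i a x)) :
    Integrable f := by
  refine sf.continuous.locallyIntegrable.integrable_of_isBigO_cocompact (g := den a b) ?_
    (h.int_den.integrableAtFilter _)
  refine Asymptotics.IsBigO.of_bound 6 ?_
  filter_upwards [h.ta.eventually (lt_mem_nhds (show (1 / 2 : ℝ) < 1 by norm_num)),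
    h.ta.eventually (lt_mem_nhds (show (3 / 4 : ℝ) < 1 by norm_num))] with x hx hx'
  rw [hf x hx, Real.norm_eq_abs, Real.norm_of_nonneg (den_nonneg x)]
  have := cur_bound (s := a x ^ 2 + b x ^ 2) (by nlinarith [sq_nonneg (b x)])
    (lagrange_id (a x) (b x) (dd i a x) (dd i b x))
  have h1 := str_le_den (a := a) (b := b) i x
  have h2 := dfc_le_den (a := a) (b := b) x
  simp only [str, dfc] at h1 h2
  linarith

lemma int_curA (i : Fin 3) : Integrable (curA a b i) :=
  h.int_of_cur (sm_curA h.sa h.sb i) i (curA_eq h.sa h.sb i)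

lemma int_curB (i : Fin 3) : Integrable (curB a b i) := by
  refine (sm_curB h.sa h.sb i).continuous.locallyIntegrable.integrable_of_isBigO_cocompact
    (g := curA a b i) ?_ ((h.int_curA i).integrableAtFilter _)
  refine Asymptotics.IsBigO.of_bound 1 ?_
  filter_upwards [h.ta.eventually (lt_mem_nhds (show (3 / 4 : ℝ) < 1 by norm_num))] with x hx
  rw [curA_eq h.sa h.sb i x (by linarith), curB, minv_eq (by nlinarith [sq_nonneg (b x)]), one_mul]

end TW

/-! ### Pohozaev identities -/

/-- Kronecker delta. -/
def kd (i j : Fin 3) : ℝ := if i = j then 1 else 0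

namespace TW
variable {a b : Ed 3 → ℝ} {c : ℝ} (h : TW c a b)
include h

/-- The field `l ↦ ⟨∂ₗψ, ∂ₖψ⟩ - δₗₖ (e + c/2 J₁) + δₗ₁ c/2 Jₖ` is divergence free at each point
where `J` has the curl of the momentum density. -/
lemma div_stress {J : Fin 3 → Ed 3 → ℝ} (sJ : ∀ i, Sm (J i)) (k : Fin 3) (x : Ed 3)
    (hc : dd 0 (J k) x - dd k (J 0) x = 2 * (dd 0 a x * dd k b x - dd 0 b x * dd k a x)) :
    ∑ l, dd l (fun x => str a b l k x - kd l k * (den a b x + c / 2 * J 0 x)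
      + kd l 0 * (c / 2 * J k x)) x = 0 := by
  have sa := h.sa
  have sb := h.sb
  have sd := sm_den sa sb
  have sJ0 := sJ 0
  have sJk := sJ k
  have ss := fun l => sm_str sa sb l k
  have e1 : ∀ l, dd l (fun x => str a b l k x - kd l k * (den a b x + c / 2 * J 0 x)
      + kd l 0 * (c / 2 * J k x)) x = dd l (str a b l k) x - kd l k * (dd l (den a b) x + c / 2 * dd l (J 0) x)
      + kd l 0 * (c / 2 * dd l (J k) x) := fun l => by
    have := ss l
    simp (disch := fun_prop) only [dd_add, dd_mul, dd_sub, dd_const]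
    ring
  have e2 : ∀ l, dd l (str a b l k) x = dd l (dd l a) x * dd k a x + dd l a x * dd l (dd k a) x
      + (dd l (dd l b) x * dd k b x + dd l b x * dd l (dd k b) x) := fun l => by
    unfold str
    simp (disch := fun_prop) only [dd_add, dd_mul]
  have e3 : dd k (den a b) x = ∑ l, (dd l a x * dd l (dd k a) x + dd l b x * dd l (dd k b) x)
      - dfc a b x * (a x * dd k a x + b x * dd k b x) := by
    unfold den str dfc
    simp (disch := fun_prop) only [dd_add, dd_mul, dd_sub, dd_const, dd_pow_two]
    simp only [dd_comm sa k, dd_comm sb k, Fin.sum_univ_three]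
    ring
  have e4 : ∀ f : Fin 3 → ℝ, ∑ l, kd l k * f l = f k := fun f => by simp [kd]
  have e5 : ∀ f : Fin 3 → ℝ, ∑ l, kd l 0 * f l = f 0 := fun f => by simp [kd]
  have h1 := h.ea x
  have h2 := h.eb x
  have h3 : ∑ l, dd l (str a b l k) x = (∑ l, dd l (dd l a) x) * dd k a x
    + (∑ l, dd l (dd l b) x) * dd k b x + ∑ l, (dd l a x * dd l (dd k a) x + dd l b x * dd l (dd k b) x) := by
    simp only [e2, Fin.sum_univ_three]; ring
  simp only [e1, Finset.sum_add_distrib, Finset.sum_sub_distrib]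
  rw [e4 (fun l => dd l (den a b) x + c / 2 * dd l (J 0) x), e5 (fun l => c / 2 * dd l (J k) x), h3, h1, h2, e3]
  simp only [Finset.sum_add_distrib, dfc]
  linear_combination c / 2 * hc

/-- Pohozaev identity with multiplier `X ∂ₖψ`. The field `J` is an integrable replacement of the
momentum density, whose curl is only needed where `X ≠ 0`. -/
lemma pohozaev {J : Fin 3 → Ed 3 → ℝ} (sJ : ∀ i, Sm (J i)) (iJ : ∀ i, Integrable (J i))
    {X : Ed 3 → ℝ} (sX : Sm X) (bX : ∃ K, ∀ x, |X x| ≤ K * (1 + ‖x‖))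
    (dX : ∀ l, ∃ K, ∀ x, |dd l X x| ≤ K) (k : Fin 3)
    (hc : ∀ x, X x ≠ 0 →
      dd 0 (J k) x - dd k (J 0) x = 2 * (dd 0 a x * dd k b x - dd 0 b x * dd k a x)) :
    ∫ x, (∑ l, dd l X x * str a b l k x - dd k X x * (den a b x + c / 2 * J 0 x)
      + dd 0 X x * (c / 2 * J k x)) = 0 := by
  set F : Fin 3 → Ed 3 → ℝ := fun l x => str a b l k x - kd l k * (den a b x + c / 2 * J 0 x)
      + kd l 0 * (c / 2 * J k x) with hF
  have sF : ∀ l, Sm (F l) := fun l => by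
    have := sm_den h.sa h.sb
    have := sJ 0
    have := sJ k
    have := sm_str h.sa h.sb l k
    simp only [hF]; fun_prop
  have iF : ∀ l, Integrable (F l) := fun l =>
    (((h.int_str l k).sub ((h.int_den.add ((iJ 0).const_mul _)).const_mul _))).add
      (((iJ k).const_mul _).const_mul _)
  have e : ∀ x, ∑ l, dd l X x * F l x + X x * ∑ l, dd l (F l) x =
      ∑ l, dd l X x * str a b l k x - dd k X x * (den a b x + c / 2 * J 0 x)
      + dd 0 X x * (c / 2 * J k x) := by
    intro x
    have : X x * ∑ l, dd l (F l) x = 0 := by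
      by_cases hx : X x = 0
      · rw [hx, zero_mul]
      · rw [h.div_stress sJ k x (hc x hx), mul_zero]
    rw [this]
    simp only [hF, Fin.sum_univ_three, kd]
    fin_cases k <;> simp <;> ring
  have := div_thm sX sF iF bX ?_
  · simpa only [e] using this
  · have : (fun x => ∑ l, dd l X x * F l x + X x * ∑ l, dd l (F l) x) = fun x => ∑ l, dd l X x * F l x := by
      funext x
      by_cases hx : X x = 0
      · rw [hx, zero_mul, add_zero]
      · rw [h.div_stress sJ k x (hc x hx), mul_zero, add_zero]
    rw [this]
    refine integrable_finset_sum _ fun l _ => ?_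
    obtain ⟨K, hK⟩ := dX l
    exact (iF l).bdd_mul (sX.dd l).continuous.aestronglyMeasurable (Eventually.of_forall hK)

lemma dd_coord_bdd (k l : Fin 3) : ∃ K, ∀ x, |dd l (fun x : Ed 3 => x k) x| ≤ K := by
  simp only [dd_coord]; exact ⟨|if l = k then 1 else 0|, fun x => le_rfl⟩

omit h in
lemma coord_bdd (k : Fin 3) : ∃ K, ∀ x : Ed 3, |x k| ≤ K * (1 + ‖x‖) :=
  ⟨1, fun x => by have := PiLp.norm_apply_le x k; rw [Real.norm_eq_abs] at this; linarith⟩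

/-- Pohozaev identity for the multiplier `x₁ ∂₁ψ`: the momentum does not enter. -/
lemma poh0 : ∫ x, den a b x = ∫ x, str a b 0 0 x := by
  have := h.pohozaev (sm_curA h.sa h.sb) h.int_curA (sm_coord 0) (coord_bdd 0) (h.dd_coord_bdd 0) 0
    (fun x _ => curl_curA h.sa h.sb 0 0 x)
  have e : ∀ x : Ed 3, ∑ l, dd l (fun x : Ed 3 => x 0) x * str a b l 0 x - dd 0 (fun x : Ed 3 => x 0) x *
      (den a b x + c / 2 * curA a b 0 x) + dd 0 (fun x : Ed 3 => x 0) x * (c / 2 * curA a b 0 x) =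
      str a b 0 0 x - den a b x := fun x => by
    simp [dd_coord]; ring
  simp only [e] at this
  rw [integral_sub (h.int_str 0 0) h.int_den] at this
  linarith

/-- Pohozaev identity for the multiplier `xₖ ∂ₖψ` in a direction transversal to the motion. -/
lemma poh (k : Fin 3) (hk : k ≠ 0) : ∫ x, (den a b x + c / 2 * curA a b 0 x) = ∫ x, str a b k k x := by
  have := h.pohozaev (sm_curA h.sa h.sb) h.int_curA (sm_coord k) (coord_bdd k) (h.dd_coord_bdd k) k
    (fun x _ => curl_curA h.sa h.sb 0 k x)
  have e : ∀ x : Ed 3, ∑ l, dd l (fun x : Ed 3 => x k) x * str a b l k x - dd k (fun x : Ed 3 => x k) x *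
      (den a b x + c / 2 * curA a b 0 x) + dd 0 (fun x : Ed 3 => x k) x * (c / 2 * curA a b k x) =
      str a b k k x - (den a b x + c / 2 * curA a b 0 x) := fun x => by
    simp [dd_coord, hk.symm]
  simp only [e] at this
  have i2 : Integrable (fun x => den a b x + c / 2 * curA a b 0 x) :=
    h.int_den.add ((h.int_curA 0).const_mul _)
  rw [integral_sub (h.int_str k k) i2] at this
  linarith

/-- The Lagrangian controls the transversal Dirichlet energies: up to the derivative of a function
vanishing at infinity, `curA` is twice the momentum density of the Lagrangian, so that the
Lagrangian is the left-hand side of `poh`. -/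
lemma trans_bound {C : ℝ} (hC : 0 ≤ C)
    (hI : (∫ x, den a b x) - c * -∫ x, dd 0 b x * (a x - 1) ≤ C) (k : Fin 3) (hk : k ≠ 0) :
    ∫ x, str a b k k x ≤ 2 * C := by
  have sa := h.sa
  have sb := h.sb
  by_cases hi : Integrable (fun x => dd 0 b x * (a x - 1))
  · -- `w` is the potential of the difference between the two momentum densities.
    set w : Ed 3 → ℝ := fun x => ang a b x - b x + (a x - 1) * b x with hw
    have s1 := sm_ang sa sb
    have sw : Sm w := by simp only [hw]; fun_prop
    have e : ∀ x, dd 0 w x = 2 * (dd 0 b x * (a x - 1)) - curA a b 0 x := fun x => by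
      simp only [hw, curA]
      simp (disch := fun_prop) only [dd_add, dd_mul, dd_sub, dd_const]
      ring
    have tw : Tendsto w (cocompact (Ed 3)) (𝓝 0) := by
      have t1 : Tendsto (fun x => Real.arctan (b x * minv (a x))) (cocompact (Ed 3)) (𝓝 0) := by
        have := (Real.continuous_arctan.tendsto _).comp
          (h.tb.mul ((sm_minv.continuous.tendsto 1).comp h.ta))
        simpa [Function.comp_def] using this
      have := (t1.sub h.tb).add ((h.ta.sub_const 1).mul h.tb)
      simpa [hw, ang] using this
    have i2 : Integrable (dd 0 w) := by
      rw [show dd 0 w = _ from funext e]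
      exact (hi.const_mul 2).sub (h.int_curA 0)
    have z := integral_dd_zero sw tw i2
    simp only [e] at z
    rw [integral_sub (hi.const_mul 2) (h.int_curA 0), integral_const_mul] at z
    have p := h.poh k hk
    rw [integral_add h.int_den ((h.int_curA 0).const_mul _), integral_const_mul] at p
    have : ∫ x, str a b k k x = (∫ x, den a b x) - c * -∫ x, dd 0 b x * (a x - 1) := by
      rw [← p]; linear_combination (-c / 2) * z
    linarith
  · -- If the momentum density is not integrable, its integral is `0` by convention and the
    -- Lagrangian is the energy, which bounds the Dirichlet energies.
    rw [integral_undef hi, neg_zero, mul_zero, sub_zero] at hI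
    calc ∫ x, str a b k k x ≤ ∫ x, 2 * den a b x :=
          integral_mono (h.int_str k k) (h.int_den.const_mul 2) fun x => str_le_den k x
      _ ≤ 2 * C := by rw [integral_const_mul]; linarith

end TW

/-! ### Points where `|ψ|` is small -/

namespace TW
variable {a b : Ed 3 → ℝ} {c q κ : ℝ}

/-- The momentum term is absorbed by the energy density where `|ψ|² > q`. The condition
`c² ≤ 2κ²q` with `κ < 1` and `q < 1` can be met exactly for speeds below the speed of sound `√2`. -/
lemma cur_small (hq : 1 / 2 < q) (hκ0 : 0 ≤ κ) (hcq : c ^ 2 ≤ 2 * κ ^ 2 * q) {x : Ed 3}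
    (hx : q < a x ^ 2 + b x ^ 2) :
    |c / 2 * curB a b 0 x| ≤ κ * (1 / 2 * str a b 0 0 x + 1 / 4 * dfc a b x ^ 2) := by
  have hT := str_nonneg (a := a) (b := b) 0 x
  refine abs_le_of_sq_le_sq ?_ (by positivity)
  have hP := lagrange_id (a x) (b x) (dd 0 a x) (dd 0 b x)
  rw [curB, minv_eq (by linarith)]
  have hs0 : 0 < a x ^ 2 + b x ^ 2 := by linarith
  change _ ≤ (a x ^ 2 + b x ^ 2) * str a b 0 0 x at hP
  set s := a x ^ 2 + b x ^ 2 with hs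
  set P := a x * dd 0 b x - b x * dd 0 a x
  set T := str a b 0 0 x
  have hη : dfc a b x = 1 - s := rfl
  rw [hη]
  have e : (c / 2 * ((1 - s⁻¹) * P)) ^ 2 = (1 - s) ^ 2 * ((c ^ 2 / 4) * (P ^ 2 / s ^ 2)) := by
    field_simp; ring
  have h1 : P ^ 2 / s ^ 2 ≤ T / s := by
    rw [div_le_div_iff₀ (by positivity) hs0]; nlinarith
  have h2 : (c ^ 2 / 4) * (P ^ 2 / s ^ 2) ≤ κ ^ 2 / 2 * T := by
    calc (c ^ 2 / 4) * (P ^ 2 / s ^ 2) ≤ (2 * κ ^ 2 * s / 4) * (T / s) := by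
          have : 2 * κ ^ 2 * q ≤ 2 * κ ^ 2 * s := by gcongr
          gcongr
          linarith
      _ = κ ^ 2 / 2 * T := by field_simp; ring
  rw [e]
  nlinarith [mul_le_mul_of_nonneg_left h2 (sq_nonneg (1 - s)),
    mul_nonneg (sq_nonneg κ) (sq_nonneg (1 / 2 * T - 1 / 4 * (1 - s) ^ 2))]

/-- Coercivity where `|ψ|² > q`. -/
lemma good_den (hq : 1 / 2 < q) (hκ0 : 0 ≤ κ) (hcq : c ^ 2 ≤ 2 * κ ^ 2 * q) {x : Ed 3}
    (hx : q < a x ^ 2 + b x ^ 2) : (1 - κ) * den a b x ≤ den a b x + c / 2 * curB a b 0 x := by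
  have h1 := abs_le.1 (cur_small hq hκ0 hcq hx)
  have h2 := str_nonneg (a := a) (b := b) 1 x
  have h3 := str_nonneg (a := a) (b := b) 2 x
  have : κ * (1 / 2 * str a b 0 0 x + 1 / 4 * dfc a b x ^ 2) ≤ κ * den a b x := by
    refine mul_le_mul_of_nonneg_left ?_ hκ0
    unfold den; linarith
  linarith

lemma eq_lim_of_dd_zero {f : Ed 3 → ℝ} (sf : Sm f) {l : ℝ} (tf : Tendsto f (cocompact (Ed 3)) (𝓝 l))
    (h0 : ∀ x, dd 0 f x = 0) (x : Ed 3) : f x = l := by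
  have hd := fun t => dd_line sf 0 x t
  simp only [h0] at hd
  have ht := (tf.comp (tendsto_line x (EuclideanSpace.single 0 1) (by simp)))
  rw [cocompact_eq_atBot_atTop] at ht
  have hc : ∀ t : ℝ, f (x + t • EuclideanSpace.single 0 1) = f x := fun t => by
    have := is_const_of_deriv_eq_zero (fun t => (hd t).differentiableAt) (fun t => (hd t).deriv) t 0
    simpa using this
  have ht2 := ht.mono_left (le_sup_right : (atTop : Filter ℝ) ≤ _)
  simp only [Function.comp_def, hc] at ht2
  exact tendsto_nhds_unique tendsto_const_nhds ht2

/-- A traveling wave with `|ψ|² > q` everywhere is constant: `curB` then has the right curl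
everywhere, and the sum of the two transversal Pohozaev identities is the integral of a nonnegative
density that controls `|∂₁ψ|²`. -/
lemma trivial_of_good (h : TW c a b) (hq : 1 / 2 < q) (hκ0 : 0 ≤ κ) (hκ1 : κ < 1)
    (hcq : c ^ 2 ≤ 2 * κ ^ 2 * q) (hg : ∀ x, q < a x ^ 2 + b x ^ 2) (x : Ed 3) :
    a x = 1 ∧ b x = 0 := by
  have iB : Integrable (fun x => den a b x + c / 2 * curB a b 0 x) :=
    h.int_den.add ((h.int_curB 0).const_mul _)
  have p : ∀ k : Fin 3, k ≠ 0 → ∫ x, (den a b x + c / 2 * curB a b 0 x) = ∫ x, str a b k k x := by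
    intro k hk
    have := h.pohozaev (sm_curB h.sa h.sb) h.int_curB (sm_coord k) (coord_bdd k) (h.dd_coord_bdd k) k
      (fun x _ => curl_curB h.sa h.sb 0 k x (by linarith [hg x]))
    have e : ∀ x : Ed 3, ∑ l, dd l (fun x : Ed 3 => x k) x * str a b l k x - dd k (fun x : Ed 3 => x k) x *
        (den a b x + c / 2 * curB a b 0 x) + dd 0 (fun x : Ed 3 => x k) x * (c / 2 * curB a b k x) =
        str a b k k x - (den a b x + c / 2 * curB a b 0 x) := fun x => by
      simp [dd_coord, hk.symm]
    simp only [e] at this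
    rw [integral_sub (h.int_str k k) iB] at this
    linarith
  have p1 := p 1 (by decide)
  have p2 := p 2 (by decide)
  set f : Ed 3 → ℝ := fun x => 2 * (den a b x + c / 2 * curB a b 0 x) - str a b 1 1 x - str a b 2 2 x with hf
  have fi : Integrable f := ((iB.const_mul 2).sub (h.int_str 1 1)).sub (h.int_str 2 2)
  have f0 : ∫ x, f x = 0 := by
    have i1 : Integrable (fun x => 2 * (den a b x + c / 2 * curB a b 0 x) - str a b 1 1 x) :=
      (iB.const_mul 2).sub (h.int_str 1 1)
    simp only [hf]
    rw [integral_sub i1 (h.int_str 2 2), integral_sub (iB.const_mul 2) (h.int_str 1 1),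
      integral_const_mul]
    linarith
  have fb : ∀ x, (1 - κ) * str a b 0 0 x ≤ f x := fun x => by
    have h1 := abs_le.1 (cur_small hq hκ0 hcq (hg x))
    have h2 := mul_nonneg (sub_nonneg.2 hκ1.le) (sq_nonneg (dfc a b x))
    simp only [hf, den]
    nlinarith
  have fn : 0 ≤ f := fun x => (mul_nonneg (sub_nonneg.2 hκ1.le) (str_nonneg 0 x)).trans (fb x)
  have fc : Continuous f := by
    have h1 := (sm_den h.sa h.sb).continuous
    have h2 := (sm_curB h.sa h.sb 0).continuous
    have h3 := (sm_str h.sa h.sb 1 1).continuous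
    have h4 := (sm_str h.sa h.sb 2 2).continuous
    simp only [hf]; fun_prop
  have fz : f = 0 := (fc.ae_eq_iff_eq volume continuous_zero).1 ((integral_eq_zero_iff_of_nonneg fn fi).1 f0)
  have s0 : ∀ x, dd 0 a x = 0 ∧ dd 0 b x = 0 := fun x => by
    have h1 := fb x
    rw [fz] at h1
    have h2 : str a b 0 0 x ≤ 0 := by
      have h3 : 0 < 1 - κ := by linarith
      by_contra! h4
      have := mul_pos h3 h4
      simp at h1; linarith
    unfold str at h2
    constructor <;> nlinarith [mul_self_nonneg (dd 0 a x), mul_self_nonneg (dd 0 b x)]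
  exact ⟨eq_lim_of_dd_zero h.sa h.ta (fun x => (s0 x).1) x, eq_lim_of_dd_zero h.sb h.tb (fun x => (s0 x).2) x⟩

lemma isCompact_bad (h : TW c a b) (hq1 : q < 1) : IsCompact {x | a x ^ 2 + b x ^ 2 ≤ q} := by
  have ht : Tendsto (fun x => a x ^ 2 + b x ^ 2) (cocompact (Ed 3)) (𝓝 1) := by
    simpa using (h.ta.pow 2).add (h.tb.pow 2)
  obtain ⟨K, hK, hK2⟩ := mem_cocompact.1 (ht.eventually (lt_mem_nhds hq1))
  have ca := h.sa.continuous
  have cb := h.sb.continuous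
  refine hK.of_isClosed_subset (isClosed_le (by fun_prop) continuous_const) fun x hx => ?_
  by_contra hxK
  have h1 : q < a x ^ 2 + b x ^ 2 := hK2 hxK
  exact absurd h1 (not_lt.2 hx)

end TW

/-! ### One-variable profiles -/

/-- Smooth bump equal to `1` on `[-1, 1]` and supported in `[-2, 2]`. -/
def bmp : ContDiffBump (0 : ℝ) := ⟨1, 2, one_pos, one_lt_two⟩

lemma sm_bmp : ContDiff ℝ (⊤ : ℕ∞) (bmp : ℝ → ℝ) := bmp.contDiff

lemma bmp_one {t : ℝ} (ht : |t| ≤ 1) : bmp t = 1 :=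
  bmp.one_of_mem_closedBall (by rw [mem_closedBall_zero_iff]; exact ht)

lemma bmp_zero {t : ℝ} (ht : 2 ≤ |t|) : bmp t = 0 :=
  bmp.zero_of_le_dist (by rw [dist_zero_right]; exact ht)

lemma bmp_pos {t : ℝ} (ht : |t| < 2) : 0 < bmp t :=
  bmp.pos_of_mem_ball (by rw [mem_ball_zero_iff]; exact ht)

lemma deriv_bmp_zero {t : ℝ} (ht : 2 < |t|) : deriv bmp t = 0 := by
  have : (bmp : ℝ → ℝ) =ᶠ[𝓝 t] fun _ => 0 := by
    filter_upwards [continuous_abs.continuousAt.eventually (lt_mem_nhds ht)] with s hs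
    exact bmp_zero hs.le
  simp [this.deriv_eq]

lemma deriv_bmp_bdd : ∃ K, 0 ≤ K ∧ ∀ t, |deriv bmp t| ≤ K := by
  obtain ⟨K, hK⟩ := (sm_bmp.continuous_deriv (by simp)).bounded_above_of_compact_support
    (bmp.hasCompactSupport.deriv)
  exact ⟨K, (norm_nonneg _).trans (hK 0), hK⟩

/-- Primitive vanishing at `0`. -/
def prim (g : ℝ → ℝ) (t : ℝ) : ℝ := ∫ s in (0 : ℝ)..t, g s

lemma deriv_prim {g : ℝ → ℝ} (hg : Continuous g) : deriv (prim g) = g := by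
  funext t
  exact hg.deriv_integral g 0 t

lemma sm_prim {g : ℝ → ℝ} (hg : ContDiff ℝ (⊤ : ℕ∞) g) : ContDiff ℝ (⊤ : ℕ∞) (prim g) := by
  rw [contDiff_infty_iff_deriv, deriv_prim hg.continuous]
  exact ⟨fun t => (hg.continuous.integral_hasStrictDerivAt 0 t).hasDerivAt.differentiableAt, hg⟩

/-- Nonnegative smooth function, positive on `(0, 2)` and zero elsewhere. -/
def hat (t : ℝ) : ℝ := Real.smoothTransition t * Real.smoothTransition (2 - t)

lemma sm_hat : ContDiff ℝ (⊤ : ℕ∞) hat :=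
  Real.smoothTransition.contDiff.mul (Real.smoothTransition.contDiff.comp (by fun_prop))

lemma hat_nonneg (t : ℝ) : 0 ≤ hat t :=
  mul_nonneg (Real.smoothTransition.nonneg _) (Real.smoothTransition.nonneg _)

lemma hat_le_one (t : ℝ) : hat t ≤ 1 :=
  mul_le_one₀ (Real.smoothTransition.le_one _) (Real.smoothTransition.nonneg _)
    (Real.smoothTransition.le_one _)

lemma hat_zero {t : ℝ} (ht : t ≤ 0) : hat t = 0 := by
  rw [hat, Real.smoothTransition.zero_of_nonpos ht, zero_mul]

lemma hat_zero' {t : ℝ} (ht : 2 ≤ t) : hat t = 0 := by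
  rw [hat, Real.smoothTransition.zero_of_nonpos (x := 2 - t) (by linarith), mul_zero]

lemma hat_pos {t : ℝ} (h0 : 0 < t) (h2 : t < 2) : 0 < hat t :=
  mul_pos (Real.smoothTransition.pos_of_pos h0) (Real.smoothTransition.pos_of_pos (by linarith))

lemma prim_hat_zero {t : ℝ} (ht : t ≤ 0) : prim hat t = 0 := by
  rw [prim, intervalIntegral.integral_symm, neg_eq_zero]
  refine intervalIntegral.integral_zero_ae (Eventually.of_forall fun s hs => hat_zero ?_)
  rw [Set.uIoc_of_le ht] at hs
  exact hs.2

lemma prim_hat_le (t : ℝ) : |prim hat t| ≤ 2 := by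
  rcases le_or_gt t 0 with h | h
  · rw [prim_hat_zero h]; norm_num
  have key : ∀ t, 0 ≤ t → t ≤ 2 → |prim hat t| ≤ 2 := fun t h0 h2 => by
    have := intervalIntegral.norm_integral_le_of_norm_le_const (a := 0) (b := t) (f := hat) (C := 1)
      (fun s _ => by rw [Real.norm_of_nonneg (hat_nonneg s)]; exact hat_le_one s)
    rw [Real.norm_eq_abs, sub_zero, abs_of_nonneg h0] at this
    unfold prim; linarith
  rcases le_or_gt t 2 with h2 | h2
  · exact key t h.le h2
  · have : prim hat t = prim hat 2 := by
      have e := intervalIntegral.integral_add_adjacent_intervals (a := 0) (b := 2) (c := t)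
        (μ := volume) (f := hat) (sm_hat.continuous.intervalIntegrable _ _)
        (sm_hat.continuous.intervalIntegrable _ _)
      have z : ∫ s in (2 : ℝ)..t, hat s = 0 := by
        refine intervalIntegral.integral_zero_ae (Eventually.of_forall fun s hs => hat_zero' ?_)
        rw [Set.uIoc_of_le h2.le] at hs
        exact hs.1.le
      unfold prim
      rw [← e, z, add_zero]
    rw [this]
    exact key 2 (by norm_num) le_rfl

lemma dd_fn {g : ℝ → ℝ} (hg : ContDiff ℝ (⊤ : ℕ∞) g) (k : Fin 3) (s : ℝ) (l : Fin 3) (x : Ed 3) :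
    dd l (fun x : Ed 3 => g (x k - s)) x = deriv g (x k - s) * kd l k := by
  rw [dd_comp hg (f := fun x : Ed 3 => x k - s) (by fun_prop)]
  simp only [dd_sub l (sm_coord k) contDiff_const, dd_coord, dd_const, kd, sub_zero]

lemma sm_fn {g : ℝ → ℝ} (hg : ContDiff ℝ (⊤ : ℕ∞) g) (k : Fin 3) (s : ℝ) :
    ContDiff ℝ (⊤ : ℕ∞) (fun x : Ed 3 => g (x k - s)) := hg.comp (by fun_prop)

/-! ### Transversal energy of a slab -/

lemma int_mul {f g : Ed 3 → ℝ} (fi : Integrable f) (gc : Continuous g) (K : ℝ)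
    (hg : ∀ x, |g x| ≤ K) : Integrable (fun x => g x * f x) :=
  fi.bdd_mul gc.aestronglyMeasurable (Eventually.of_forall hg)

lemma bmp_nonneg (t : ℝ) : 0 ≤ bmp t := bmp.nonneg

lemma bmp_le_one (t : ℝ) : bmp t ≤ 1 := bmp.le_one

lemma abs_bmp (t : ℝ) : |bmp t| ≤ 1 := by
  rw [abs_of_nonneg (bmp_nonneg t)]; exact bmp_le_one t

lemma abs_hat (t : ℝ) : |hat t| ≤ 1 := by
  rw [abs_of_nonneg (hat_nonneg t)]; exact hat_le_one t

lemma abs_coord_le (x : Ed 3) (k : Fin 3) : |x k| ≤ ‖x‖ := PiLp.norm_apply_le x k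

/-- Each slab `|x₂ - s| ≤ 1` meeting the bad region `|ψ|² ≤ q` has a neighbourhood carrying a fixed
amount of transversal Dirichlet energy. The multiplier `X ∂₃ψ`, with `X` supported above a highest
bad point `z` of the slab `|x₂ - s| ≤ 2`, sees only good points, so that `curB` may be used in the
Pohozaev identity. By the Lipschitz bound the energy density just above `z` is bounded below, and
the identity bounds it by the transversal energy. -/
lemma slab_bound (q κ L : ℝ) (hq : 1 / 2 < q) (hq1 : q < 1) (hκ0 : 0 ≤ κ) (hκ1 : κ < 1) (hL : 0 < L) :
    ∃ ε, 0 < ε ∧ ∀ (c : ℝ) (a b : Ed 3 → ℝ), TW c a b → c ^ 2 ≤ 2 * κ ^ 2 * q →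
      (∀ x y, |dfc a b x - dfc a b y| ≤ L * ‖x - y‖) → ∀ s : ℝ,
      (∃ x : Ed 3, a x ^ 2 + b x ^ 2 ≤ q ∧ |x 1 - s| ≤ 1) →
      ε ≤ ∫ x : Ed 3, bmp ((x 1 - s) / 2) * (str a b 1 1 x + str a b 2 2 x) := by
  obtain ⟨K, hK0, hK⟩ := deriv_bmp_bdd
  -- The radius `r` is such that `1 - |ψ|² ≥ (1 - q)/2` at distance at most `9r/8` from a bad point.
  obtain ⟨r, hr0, hr1, hrL⟩ : ∃ r : ℝ, 0 < r ∧ r ≤ 1 ∧ L * r ≤ (1 - q) / 4 := by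
    refine ⟨min 1 ((1 - q) / (4 * L)), lt_min one_pos (by apply div_pos <;> linarith), min_le_left _ _, ?_⟩
    calc L * min 1 ((1 - q) / (4 * L)) ≤ L * ((1 - q) / (4 * L)) := by gcongr; exact min_le_right _ _
      _ = (1 - q) / 4 := by field_simp
  obtain ⟨β, hβ0, hβ⟩ : ∃ β, 0 < β ∧ ∀ t, 3 * r / 8 ≤ t → t ≤ 5 * r / 8 → β ≤ hat t := by
    obtain ⟨t0, ht0, hm⟩ := isCompact_Icc.exists_isMinOn (s := Set.Icc (3 * r / 8) (5 * r / 8))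
      (Set.nonempty_Icc.2 (by linarith)) sm_hat.continuous.continuousOn
    exact ⟨hat t0, hat_pos (by linarith [ht0.1]) (by linarith [ht0.2]), fun t h1 h2 => hm ⟨h1, h2⟩⟩
  obtain ⟨b0, hb0, hb⟩ : ∃ b0, 0 < b0 ∧ ∀ t, |t| ≤ 2 - 3 * r / 8 → b0 ≤ bmp t := by
    obtain ⟨t0, ht0, hm⟩ := isCompact_Icc.exists_isMinOn (s := Set.Icc (-(2 - 3 * r / 8)) (2 - 3 * r / 8))
      (Set.nonempty_Icc.2 (by linarith)) sm_bmp.continuous.continuousOn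
    exact ⟨bmp t0, bmp_pos (by linarith [abs_le.2 ht0]), fun t h1 => hm (abs_le.1 h1)⟩
  set V := volume.real (ball (0 : Ed 3) (r / 8)) with hV
  have hV0 : 0 < V := by
    refine ENNReal.toReal_pos (measure_ball_pos _ _ (by linarith)).ne' measure_ball_lt_top.ne
  refine ⟨(1 - κ) * (β * b0 * (1 / 16 * (1 - q) ^ 2)) * V / (1 + K), ?_, ?_⟩
  · have : 0 < 1 - κ := by linarith
    have : 0 < 1 - q := by linarith
    positivity
  intro c a b h hcq hLip s ⟨x0, hx0, hxs⟩
  -- A highest bad point `z` of the slab.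
  obtain ⟨z, ⟨hz1, hz2⟩, hz⟩ := ((h.isCompact_bad hq1).inter_right
    (t := {x : Ed 3 | |x 1 - s| ≤ 2}) (isClosed_le (by fun_prop) continuous_const)).exists_isMaxOn
    ⟨x0, hx0, by change |x0 1 - s| ≤ 2; linarith⟩ (f := fun x : Ed 3 => x 2) (by fun_prop)
  change |z 1 - s| ≤ 2 at hz2
  change a z ^ 2 + b z ^ 2 ≤ q at hz1
  have good : ∀ x : Ed 3, |x 1 - s| ≤ 2 → z 2 < x 2 → q < a x ^ 2 + b x ^ 2 := fun x h1 h2 => by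
    by_contra! h3
    have : x 2 ≤ z 2 := hz ⟨h3, h1⟩
    linarith
  have s1 := sm_fn (sm_prim sm_hat) 2 (z 2)
  have s2 := sm_fn sm_bmp 1 s
  have c1 : Continuous hat := sm_hat.continuous
  have c2 : Continuous bmp := sm_bmp.continuous
  have c3 : Continuous (prim hat) := (sm_prim sm_hat).continuous
  have c4 : Continuous (deriv bmp) := sm_bmp.continuous_deriv (by simp)
  set X : Ed 3 → ℝ := fun x => prim hat (x 2 - z 2) * bmp (x 1 - s) with hX
  have dX : ∀ l x, dd l X x = prim hat (x 2 - z 2) * (deriv bmp (x 1 - s) * kd l 1)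
      + hat (x 2 - z 2) * kd l 2 * bmp (x 1 - s) := fun l x => by
    rw [hX, dd_mul l s1 s2]; beta_reduce
    rw [dd_fn (sm_prim sm_hat), dd_fn sm_bmp, deriv_prim c1]
    ring
  have aPB : ∀ u v, |prim hat u * deriv bmp v| ≤ 2 * K := fun u v => by
    rw [abs_mul]; gcongr; exacts [prim_hat_le u, hK v]
  have aHB : ∀ u v, |hat u * bmp v| ≤ 1 := fun u v => by
    rw [abs_mul]; exact mul_le_one₀ (abs_hat u) (abs_nonneg _) (abs_bmp v)
  have key := h.pohozaev (sm_curB h.sa h.sb) h.int_curB (X := X) (s1.mul s2)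
    ⟨2, fun x => by
      rw [hX, abs_mul]
      have := mul_le_mul (prim_hat_le (x 2 - z 2)) (abs_bmp (x 1 - s)) (abs_nonneg _) zero_le_two
      linarith [norm_nonneg x]⟩
    (fun l => ⟨2 * K + 1, fun x => by
      rw [dX]
      have h1 := aPB (x 2 - z 2) (x 1 - s)
      have h2 := aHB (x 2 - z 2) (x 1 - s)
      have k1 : |kd l 1| ≤ 1 := by unfold kd; split_ifs <;> simp
      have k2 : |kd l 2| ≤ 1 := by unfold kd; split_ifs <;> simp
      have e : prim hat (x 2 - z 2) * (deriv bmp (x 1 - s) * kd l 1)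
        + hat (x 2 - z 2) * kd l 2 * bmp (x 1 - s) = prim hat (x 2 - z 2) * deriv bmp (x 1 - s) * kd l 1
        + hat (x 2 - z 2) * bmp (x 1 - s) * kd l 2 := by ring
      rw [e]
      refine (abs_add_le _ _).trans (add_le_add ?_ ?_)
      · rw [abs_mul]; exact (mul_le_of_le_one_right (abs_nonneg _) k1).trans h1
      · rw [abs_mul]; exact (mul_le_of_le_one_right (abs_nonneg _) k2).trans h2⟩) 2
    (fun x hx => curl_curB h.sa h.sb 0 2 x (by
      have h1 : z 2 < x 2 := by
        by_contra! h1
        exact hx (by simp only [hX]; rw [prim_hat_zero (by linarith), zero_mul])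
      have h2 : |x 1 - s| < 2 := by
        by_contra! h2
        exact hx (by simp only [hX]; rw [bmp_zero h2, mul_zero])
      linarith [good x h2.le h1]))
  set G : Ed 3 → ℝ := fun x => prim hat (x 2 - z 2) * deriv bmp (x 1 - s) * str a b 1 2 x
    + hat (x 2 - z 2) * bmp (x 1 - s) * str a b 2 2 x
    - hat (x 2 - z 2) * bmp (x 1 - s) * (den a b x + c / 2 * curB a b 0 x) with hG
  have G0 : ∫ x, G x = 0 := by
    rw [← key]
    congr 1; funext x
    simp [hG, Fin.sum_univ_three, dX, kd]
  have iHB : ∀ f : Ed 3 → ℝ, Integrable f → Integrable (fun x => hat (x 2 - z 2) * bmp (x 1 - s) * f x) :=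
    fun f hf => int_mul hf (by fun_prop) 1 fun x => aHB _ _
  have iG : Integrable G :=
    ((int_mul (h.int_str 1 2) (by fun_prop) (2 * K) fun x => aPB _ _).add (iHB _ (h.int_str 2 2))).sub
      (iHB _ (h.int_den.add ((h.int_curB 0).const_mul _)))
  have iW : Integrable (fun x : Ed 3 => bmp ((x 1 - s) / 2) * (str a b 1 1 x + str a b 2 2 x)) :=
    int_mul ((h.int_str 1 1).add (h.int_str 2 2)) (by fun_prop) 1 fun x => abs_bmp _
  have up : ∀ x, (1 - κ) * (hat (x 2 - z 2) * bmp (x 1 - s) * den a b x)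
      ≤ (1 + K) * (bmp ((x 1 - s) / 2) * (str a b 1 1 x + str a b 2 2 x)) - G x := fun x => by
    have n1 := str_nonneg (a := a) (b := b) 1 x
    have n2 := str_nonneg (a := a) (b := b) 2 x
    have n3 := abs_str_le (a := a) (b := b) 1 2 x
    have n4 := mul_nonneg (hat_nonneg (x 2 - z 2)) (bmp_nonneg (x 1 - s))
    have n5 := (abs_le.1 (aHB (x 2 - z 2) (x 1 - s))).2
    rcases le_or_gt |x 1 - s| 2 with h2 | h2
    · have w1 : bmp ((x 1 - s) / 2) = 1 := bmp_one (by
        rw [abs_div, abs_two]; linarith)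
      have e1 : (1 - κ) * (hat (x 2 - z 2) * bmp (x 1 - s) * den a b x) ≤
          hat (x 2 - z 2) * bmp (x 1 - s) * (den a b x + c / 2 * curB a b 0 x) := by
        rcases le_or_gt (x 2) (z 2) with h3 | h3
        · rw [hat_zero (by linarith)]; simp
        · have := mul_le_mul_of_nonneg_left (TW.good_den hq hκ0 hcq (good x h2 h3)) n4
          linarith
      have e2 : prim hat (x 2 - z 2) * deriv bmp (x 1 - s) * str a b 1 2 x ≤
          2 * K * (1 / 2 * (str a b 1 1 x + str a b 2 2 x)) := by
        refine (le_abs_self _).trans ?_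
        rw [abs_mul]
        exact mul_le_mul (aPB _ _) n3 (abs_nonneg _) (by positivity)
      have e3 : hat (x 2 - z 2) * bmp (x 1 - s) * str a b 2 2 x ≤ str a b 2 2 x :=
        mul_le_of_le_one_left n2 n5
      rw [w1]; simp only [hG]; linarith
    · have w0 := mul_nonneg (add_nonneg zero_le_one hK0)
        (mul_nonneg (bmp_nonneg ((x 1 - s) / 2)) (add_nonneg n1 n2))
      simp only [hG, bmp_zero h2.le, deriv_bmp_zero h2]
      simpa using w0
  have low : β * b0 * (1 / 16 * (1 - q) ^ 2) * V ≤ ∫ x, hat (x 2 - z 2) * bmp (x 1 - s) * den a b x := by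
    -- The ball of radius `r/8` about `p` lies above `z`, and the sign `σ` moves it towards the
    -- interior of the slab, where the cutoff `bmp` is bounded below.
    obtain ⟨σ, hσ, hσs⟩ : ∃ σ : ℝ, |σ| = 1 ∧ |z 1 - s + σ * (r / 2)| ≤ 2 - r / 2 := by
      have := abs_le.1 hz2
      rcases le_or_gt 0 (z 1 - s) with h0 | h0
      · exact ⟨-1, by simp, by rw [abs_le]; constructor <;> linarith⟩
      · exact ⟨1, by simp, by rw [abs_le]; constructor <;> linarith⟩
    set p : Ed 3 := z + (EuclideanSpace.single 1 (σ * (r / 2)) + EuclideanSpace.single 2 (r / 2)) with hp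
    have hpz : ‖p - z‖ ≤ r := by
      rw [hp, add_sub_cancel_left]
      refine (norm_add_le _ _).trans ?_
      simp [abs_mul, hσ, abs_of_pos hr0]
    have hVp : V = volume.real (ball p (r / 8)) := by
      rw [hV, Measure.addHaar_real_ball_center volume p]
    calc β * b0 * (1 / 16 * (1 - q) ^ 2) * V
        = ∫ x in ball p (r / 8), β * b0 * (1 / 16 * (1 - q) ^ 2) := by
          rw [setIntegral_const, hVp, smul_eq_mul, mul_comm]
      _ ≤ ∫ x in ball p (r / 8), hat (x 2 - z 2) * bmp (x 1 - s) * den a b x := by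
          refine setIntegral_mono_on (integrableOn_const measure_ball_lt_top.ne)
            (iHB _ h.int_den).integrableOn measurableSet_ball fun x hx => ?_
          rw [mem_ball, dist_eq_norm] at hx
          have x1 := abs_le.1 ((abs_coord_le (x - p) 1).trans hx.le)
          have x2 := abs_le.1 ((abs_coord_le (x - p) 2).trans hx.le)
          have p1 : p 1 = z 1 + σ * (r / 2) := by simp [hp]
          have p2 : p 2 = z 2 + r / 2 := by simp [hp]
          simp only [PiLp.sub_apply, p1, p2] at x1 x2
          have y1 := abs_le.1 hσs
          have g1 : β ≤ hat (x 2 - z 2) := hβ _ (by linarith) (by linarith)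
          have g2 : b0 ≤ bmp (x 1 - s) := hb _ (by rw [abs_le]; constructor <;> linarith)
          have g3 : 1 / 16 * (1 - q) ^ 2 ≤ den a b x := by
            have t1 : ‖x - z‖ ≤ 9 / 8 * r := by
              have := norm_add_le (x - p) (p - z)
              rw [sub_add_sub_cancel] at this
              linarith
            have t2 := (abs_le.1 (hLip x z)).1
            have t3 : L * ‖x - z‖ ≤ 9 / 32 * (1 - q) := by
              calc L * ‖x - z‖ ≤ L * (9 / 8 * r) := by gcongr
                _ = 9 / 8 * (L * r) := by ring
                _ ≤ _ := by linarith
            have t4 : dfc a b z = 1 - (a z ^ 2 + b z ^ 2) := rfl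
            have t5 : (1 - q) / 2 ≤ dfc a b x := by linarith
            have t6 := dfc_le_den (a := a) (b := b) x
            nlinarith
          have := den_nonneg (a := a) (b := b) x
          have := bmp_nonneg (x 1 - s)
          have := hat_nonneg (x 2 - z 2)
          gcongr
      _ ≤ _ := setIntegral_le_integral (iHB _ h.int_den) (Eventually.of_forall fun x =>
          mul_nonneg (mul_nonneg (hat_nonneg _) (bmp_nonneg _)) (den_nonneg x))
  have fin := integral_mono ((iHB _ h.int_den).const_mul (1 - κ)) ((iW.const_mul (1 + K)).sub iG) up
  have e : ∫ x, ((1 + K) * (bmp ((x 1 - s) / 2) * (str a b 1 1 x + str a b 2 2 x)) - G x) =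
      (1 + K) * ∫ x : Ed 3, bmp ((x 1 - s) / 2) * (str a b 1 1 x + str a b 2 2 x) := by
    rw [integral_sub (iW.const_mul (1 + K)) iG, G0, sub_zero, integral_const_mul]
  rw [div_le_iff₀ (by linarith)]
  have f2 : (1 - κ) * ∫ x, hat (x 2 - z 2) * bmp (x 1 - s) * den a b x ≤
      (1 + K) * ∫ x : Ed 3, bmp ((x 1 - s) / 2) * (str a b 1 1 x + str a b 2 2 x) := by
    rw [← e, ← integral_const_mul]; exact fin
  have f3 := mul_le_mul_of_nonneg_left low (sub_nonneg.2 hκ1.le)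
  linarith

/-! ### Bound for the energy -/

/-- Cutoff removing the slabs labelled by `T`: a smooth function of one variable with values in
`[0, 1]` which vanishes within distance `1` of the points of `T` and equals `1` at distance at least
`2` from all of them. -/
def cutg (T : Finset ℤ) (y : ℝ) : ℝ := ∏ s ∈ T, (1 - bmp (y - s))

lemma sm_cutg (T : Finset ℤ) : ContDiff ℝ (⊤ : ℕ∞) (cutg T) :=
  contDiff_prod fun s _ => contDiff_const.sub (sm_bmp.comp (by fun_prop))

lemma cutg_nonneg (T : Finset ℤ) (y : ℝ) : 0 ≤ cutg T y :=
  Finset.prod_nonneg fun s _ => sub_nonneg.2 (bmp_le_one _)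

lemma cutg_le_one (T : Finset ℤ) (y : ℝ) : cutg T y ≤ 1 :=
  Finset.prod_le_one (fun s _ => sub_nonneg.2 (bmp_le_one _)) fun s _ => by linarith [bmp_nonneg (y - s)]

lemma abs_cutg (T : Finset ℤ) (y : ℝ) : |cutg T y| ≤ 1 := by
  rw [abs_of_nonneg (cutg_nonneg T y)]; exact cutg_le_one T y

lemma cutg_zero {T : Finset ℤ} {y : ℝ} {s : ℤ} (hs : s ∈ T) (hy : |y - s| ≤ 1) : cutg T y = 0 :=
  Finset.prod_eq_zero hs (by rw [bmp_one hy, sub_self])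

lemma one_sub_cutg_le (T : Finset ℤ) (y : ℝ) : 1 - cutg T y ≤ ∑ s ∈ T, bmp (y - s) := by
  induction T using Finset.induction_on with
  | empty => simp [cutg]
  | insert s T hs ih =>
    have e : cutg (insert s T) y = (1 - bmp (y - s)) * cutg T y := by
      rw [cutg, Finset.prod_insert hs]; rfl
    rw [Finset.sum_insert hs, e]
    nlinarith [bmp_nonneg (y - s), cutg_le_one T y]

lemma prim_cutg_le (T : Finset ℤ) (t : ℝ) : |prim (cutg T) t| ≤ |t| := by
  have := intervalIntegral.norm_integral_le_of_norm_le_const (a := 0) (b := t) (f := cutg T) (C := 1)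
    (fun s _ => abs_cutg T s)
  simpa [prim] using this

/-- The primitive of the cutoff differs from the identity by a bounded amount, controlled by the
number of excluded slabs. -/
lemma sub_prim_cutg_le (T : Finset ℤ) (t : ℝ) : |t - prim (cutg T) t| ≤ 4 * T.card := by
  have cg := (sm_cutg T).continuous
  have cb : Continuous bmp := sm_bmp.continuous
  have e : t - prim (cutg T) t = ∫ s in (0 : ℝ)..t, (1 - cutg T s) := by
    rw [intervalIntegral.integral_sub (by simp) (cg.intervalIntegrable _ _)]
    simp [prim]
  have ib : Integrable (bmp : ℝ → ℝ) := bmp.integrable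
  have ibs : ∀ s ∈ T, Integrable (fun y : ℝ => bmp (y - (s : ℝ))) := fun s _ => ib.comp_sub_right _
  have n : ∀ y, ‖1 - cutg T y‖ = 1 - cutg T y := fun y =>
    Real.norm_of_nonneg (sub_nonneg.2 (cutg_le_one T y))
  rw [e, ← Real.norm_eq_abs]
  calc ‖∫ s in (0 : ℝ)..t, (1 - cutg T s)‖ ≤ ∫ s in Set.uIoc 0 t, ‖1 - cutg T s‖ :=
        intervalIntegral.norm_integral_le_integral_norm_uIoc
    _ ≤ ∫ y in Set.uIoc 0 t, ∑ s ∈ T, bmp (y - s) := by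
        simp only [n]
        refine setIntegral_mono ?_ (integrable_finset_sum _ ibs).integrableOn fun y => one_sub_cutg_le T y
        exact ((continuous_const.sub cg).intervalIntegrable 0 t).def'
    _ ≤ ∫ y, ∑ s ∈ T, bmp (y - s) :=
        setIntegral_le_integral (integrable_finset_sum _ ibs)
          (Eventually.of_forall fun y => Finset.sum_nonneg fun s _ => bmp_nonneg _)
    _ = ∑ s ∈ T, ∫ y, bmp y := by
        rw [integral_finset_sum _ ibs]
        exact Finset.sum_congr rfl fun s _ => integral_sub_right_eq_self _ _
    _ ≤ ∑ s ∈ T, 4 := by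
        refine Finset.sum_le_sum fun s _ => ?_
        have := bmp.integral_le_measure_closedBall (μ := volume)
        have e2 : volume.real (closedBall (0 : ℝ) bmp.rOut) = 4 := by
          rw [Measure.real, Real.volume_closedBall]
          change (ENNReal.ofReal (2 * 2)).toReal = 4
          rw [ENNReal.toReal_ofReal (by norm_num)]; norm_num
        linarith
    _ = 4 * T.card := by rw [Finset.sum_const, nsmul_eq_mul, mul_comm]

lemma dd_fn0 {g : ℝ → ℝ} (hg : ContDiff ℝ (⊤ : ℕ∞) g) (k l : Fin 3) (x : Ed 3) :
    dd l (fun x : Ed 3 => g (x k)) x = deriv g (x k) * kd l k := by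
  simpa using dd_fn hg k 0 l x

lemma sm_fn0 {g : ℝ → ℝ} (hg : ContDiff ℝ (⊤ : ℕ∞) g) (k : Fin 3) :
    ContDiff ℝ (⊤ : ℕ∞) (fun x : Ed 3 => g (x k)) := hg.comp (by fun_prop)

namespace TW
variable {a b : Ed 3 → ℝ} {c q κ : ℝ} (h : TW c a b)
include h

/-- On slabs free of bad points the energy is controlled by the transversal Dirichlet energy. This is
the Pohozaev identity whose multiplier is the primitive of `cutg T` in the variable `x₂`. The
identity needs the current `curA`, which has the right curl everywhere, whereas the sharp pointwise
bound `good_den` needs `curB`; the two can be exchanged because their difference is curl-free on the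
support of the cutoff. -/
lemma good_int (hq : 1 / 2 < q) (hκ0 : 0 ≤ κ) (hcq : c ^ 2 ≤ 2 * κ ^ 2 * q) (T : Finset ℤ)
    (hT : ∀ x : Ed 3, cutg T (x 1) ≠ 0 → q < a x ^ 2 + b x ^ 2) :
    (1 - κ) * ∫ x : Ed 3, cutg T (x 1) * den a b x ≤ ∫ x, str a b 1 1 x := by
  have cg := (sm_cutg T).continuous
  have ig : ∀ f : Ed 3 → ℝ, Integrable f → Integrable (fun x : Ed 3 => cutg T (x 1) * f x) :=
    fun f hf => int_mul hf (by fun_prop) 1 fun x => abs_cutg T _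
  have sp := sm_fn0 (sm_prim (sm_cutg T)) 1
  have sg := sm_fn0 (sm_cutg T) 1
  have dP : ∀ l x, dd l (fun x : Ed 3 => prim (cutg T) (x 1)) x = cutg T (x 1) * kd l 1 := fun l x => by
    rw [dd_fn0 (sm_prim (sm_cutg T)), deriv_prim cg]
  have A := h.pohozaev (sm_curA h.sa h.sb) h.int_curA sp
    ⟨1, fun x => by
      rw [one_mul]
      exact ((prim_cutg_le T _).trans (abs_coord_le x 1)).trans (by linarith)⟩
    (fun l => ⟨1, fun x => by
      rw [dP, abs_mul]
      have k1 : |kd l 1| ≤ 1 := by unfold kd; split_ifs <;> simp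
      exact mul_le_one₀ (abs_cutg T _) (abs_nonneg _) k1⟩) 1
    (fun x _ => curl_curA h.sa h.sb 0 1 x)
  have e1 : ∀ x : Ed 3, ∑ l, dd l (fun x : Ed 3 => prim (cutg T) (x 1)) x * str a b l 1 x
      - dd 1 (fun x : Ed 3 => prim (cutg T) (x 1)) x * (den a b x + c / 2 * curA a b 0 x)
      + dd 0 (fun x : Ed 3 => prim (cutg T) (x 1)) x * (c / 2 * curA a b 1 x) =
      cutg T (x 1) * str a b 1 1 x - cutg T (x 1) * (den a b x + c / 2 * curA a b 0 x) := fun x => by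
    simp [Fin.sum_univ_three, dP, kd]
  simp only [e1] at A
  have iA : Integrable (fun x => den a b x + c / 2 * curA a b 0 x) :=
    h.int_den.add ((h.int_curA 0).const_mul _)
  have iB : Integrable (fun x => den a b x + c / 2 * curB a b 0 x) :=
    h.int_den.add ((h.int_curB 0).const_mul _)
  rw [integral_sub (ig _ (h.int_str 1 1)) (ig _ iA)] at A
  -- The difference of the two currents is curl-free where `cutg T x₂ ≠ 0`. Rotated in the plane
  -- of `x₁` and `x₃` it is divergence-free there, and testing with `x₃ * cutg T x₂` gives the claim.
  have B : ∫ x : Ed 3, cutg T (x 1) * (curB a b 0 x - curA a b 0 x) = 0 := by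
    have sA := fun i => sm_curA h.sa h.sb i
    have sB := fun i => sm_curB h.sa h.sb i
    set Y : Ed 3 → ℝ := fun x => x 2 * cutg T (x 1) with hY
    set F : Fin 3 → Ed 3 → ℝ := ![fun x => curA a b 2 x - curB a b 2 x, fun _ => 0,
      fun x => curB a b 0 x - curA a b 0 x] with hF
    have dY : ∀ l x, dd l Y x = kd l 2 * cutg T (x 1) + x 2 * (deriv (cutg T) (x 1) * kd l 1) :=
      fun l x => by
        rw [hY, dd_mul l (sm_coord 2) sg]; beta_reduce
        rw [dd_fn0 (sm_cutg T), dd_coord]; simp [kd]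
    have e : ∀ x, ∑ l, dd l Y x * F l x + Y x * ∑ l, dd l (F l) x =
        cutg T (x 1) * (curB a b 0 x - curA a b 0 x) := fun x => by
      have z : Y x * (dd 0 (fun x => curA a b 2 x - curB a b 2 x) x +
          dd 2 (fun x => curB a b 0 x - curA a b 0 x) x) = 0 := by
        by_cases hx : cutg T (x 1) = 0
        · simp [hY, hx]
        · have c1 := curl_curA h.sa h.sb 0 2 x
          have c2 := curl_curB h.sa h.sb 0 2 x (by linarith [hT x hx])
          rw [dd_sub 0 (sA 2) (sB 2), dd_sub 2 (sB 0) (sA 0)]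
          have : dd 0 (curA a b 2) x - dd 0 (curB a b 2) x + (dd 2 (curB a b 0) x - dd 2 (curA a b 0) x) = 0 := by
            linarith
          exact mul_eq_zero_of_right _ this
      simp [Fin.sum_univ_three, dY, kd, hF, dd_const] at z ⊢
      exact z
    have iD := ig _ ((h.int_curB 0).sub (h.int_curA 0))
    have := div_thm (X := Y) (F := F) ((sm_coord 2).mul sg)
      (fun l => by fin_cases l; exacts [(sA 2).sub (sB 2), contDiff_const, (sB 0).sub (sA 0)])
      (fun l => by
        fin_cases l
        exacts [(h.int_curA 2).sub (h.int_curB 2), integrable_zero _ _ _, (h.int_curB 0).sub (h.int_curA 0)])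
      ⟨1, fun x => by
        rw [hY, abs_mul, one_mul]
        exact ((mul_le_of_le_one_right (abs_nonneg _) (abs_cutg T _)).trans (abs_coord_le x 2)).trans
          (by linarith)⟩
      (by simp only [e]; exact iD)
    simpa only [e] using this
  have e2 : ∫ x : Ed 3, cutg T (x 1) * (den a b x + c / 2 * curB a b 0 x) =
      ∫ x : Ed 3, cutg T (x 1) * (den a b x + c / 2 * curA a b 0 x) := by
    have e3 : ∀ x : Ed 3, cutg T (x 1) * (den a b x + c / 2 * curB a b 0 x) =
        cutg T (x 1) * (den a b x + c / 2 * curA a b 0 x) +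
          c / 2 * (cutg T (x 1) * (curB a b 0 x - curA a b 0 x)) := fun x => by ring
    have iBA : Integrable (fun x : Ed 3 => cutg T (x 1) * (curB a b 0 x - curA a b 0 x)) :=
      ig _ ((h.int_curB 0).sub (h.int_curA 0))
    simp only [e3]
    rw [integral_add (ig _ iA) (iBA.const_mul _), integral_const_mul, B]
    simp
  have l1 : (1 - κ) * ∫ x : Ed 3, cutg T (x 1) * den a b x ≤
      ∫ x : Ed 3, cutg T (x 1) * (den a b x + c / 2 * curB a b 0 x) := by
    rw [← integral_const_mul]
    refine integral_mono ((ig _ h.int_den).const_mul _) (ig _ iB) fun x => ?_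
    by_cases hx : cutg T (x 1) = 0
    · simp [hx]
    · have := mul_le_mul_of_nonneg_left (good_den hq hκ0 hcq (hT x hx)) (cutg_nonneg T (x 1))
      simp only; linarith
  have l2 : ∫ x : Ed 3, cutg T (x 1) * str a b 1 1 x ≤ ∫ x, str a b 1 1 x :=
    integral_mono (ig _ (h.int_str 1 1)) (h.int_str 1 1) fun x =>
      mul_le_of_le_one_left (str_nonneg 1 x) (cutg_le_one T _)
  linarith

/-- A Poincaré type inequality in the direction transversal to the slabs, obtained by integrating by
parts against the bounded function `x₂ - prim (cutg T) x₂`, whose derivative in the variable `x₂`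
is `1 - cutg T x₂`. -/
lemma dfc_bound (hc2 : c ^ 2 ≤ 2) (T : Finset ℤ) :
    ∫ x, dfc a b x ^ 2 ≤ 2 * (∫ x : Ed 3, cutg T (x 1) * dfc a b x ^ 2) +
      24 * (4 * T.card) ^ 2 * ∫ x, str a b 1 1 x := by
  have cg := (sm_cutg T).continuous
  have sp := sm_fn0 (sm_prim (sm_cutg T)) 1
  have sd := sm_dfc h.sa h.sb
  have sd1 := sd.dd 1
  have ig : Integrable (fun x : Ed 3 => cutg T (x 1) * dfc a b x ^ 2) :=
    int_mul h.int_dfc (by fun_prop) 1 fun x => abs_cutg T _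
  set m : ℝ := 4 * T.card with hm
  set Z : Ed 3 → ℝ := fun x => x 1 - prim (cutg T) (x 1) with hZ
  have sZ : Sm Z := (sm_coord 1).sub sp
  have bZ : ∀ x, |Z x| ≤ m := fun x => sub_prim_cutg_le T _
  have m0 : 0 ≤ m := by positivity
  have dZ : ∀ l x, dd l Z x = (1 - cutg T (x 1)) * kd l 1 := fun l x => by
    rw [hZ, dd_sub l (sm_coord 1) sp]; beta_reduce
    rw [dd_fn0 (sm_prim (sm_cutg T)), deriv_prim cg, dd_coord]
    simp only [kd]; ring
  have d1 : ∀ x, dd 1 (dfc a b) x ^ 2 ≤ 6 * str a b 1 1 x := fun x => by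
    have sa := h.sa
    have sb := h.sb
    have e : dd 1 (dfc a b) x = -2 * (a x * dd 1 a x + b x * dd 1 b x) := by
      have : dfc a b = fun x => 1 - (a x ^ 2 + b x ^ 2) := rfl
      rw [this]
      simp (disch := fun_prop) only [dd_add, dd_mul, dd_sub, dd_const, dd_pow_two, dd_coord]
      ring
    rw [e]
    have s1 := h.sup_bound x
    have s2 : a x ^ 2 + b x ^ 2 ≤ 3 / 2 := by linarith
    have s3 : (a x * dd 1 a x + b x * dd 1 b x) ^ 2 ≤
        (a x ^ 2 + b x ^ 2) * (dd 1 a x ^ 2 + dd 1 b x ^ 2) := by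
      nlinarith [sq_nonneg (a x * dd 1 b x - b x * dd 1 a x)]
    have s4 := mul_le_mul_of_nonneg_right s2 (add_nonneg (sq_nonneg (dd 1 a x)) (sq_nonneg (dd 1 b x)))
    unfold str
    nlinarith
  have yb : ∀ x, |2 * Z x * dfc a b x * dd 1 (dfc a b) x| ≤
      1 / 2 * dfc a b x ^ 2 + 12 * m ^ 2 * str a b 1 1 x := fun x => by
    have h1 := d1 x
    have h2 : |2 * Z x * dfc a b x * dd 1 (dfc a b) x| ≤ 2 * m * |dfc a b x| * |dd 1 (dfc a b) x| := by
      rw [abs_mul, abs_mul, abs_mul, abs_two]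
      gcongr; exact bZ x
    have h3 : m ^ 2 * dd 1 (dfc a b) x ^ 2 ≤ m ^ 2 * (6 * str a b 1 1 x) := by gcongr
    nlinarith [sq_nonneg (|dfc a b x| - 2 * m * |dd 1 (dfc a b) x|), sq_abs (dfc a b x),
      sq_abs (dd 1 (dfc a b) x)]
  have iy : Integrable (fun x => 2 * Z x * dfc a b x * dd 1 (dfc a b) x) :=
    ((h.int_dfc.const_mul (1 / 2)).add ((h.int_str 1 1).const_mul (12 * m ^ 2))).mono'
      (by have := sZ.continuous; have := sd.continuous; have := sd1.continuous; fun_prop)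
      (Eventually.of_forall yb)
  set F : Fin 3 → Ed 3 → ℝ := ![fun _ => 0, fun x => dfc a b x ^ 2, fun _ => 0] with hF
  have e : ∀ x, ∑ l, dd l Z x * F l x + Z x * ∑ l, dd l (F l) x =
      (dfc a b x ^ 2 - cutg T (x 1) * dfc a b x ^ 2) + 2 * Z x * dfc a b x * dd 1 (dfc a b) x := fun x => by
    simp [Fin.sum_univ_three, dZ, kd, hF, dd_const, dd_pow_two 1 sd]
    ring
  have iD : Integrable (fun x : Ed 3 => (dfc a b x ^ 2 - cutg T (x 1) * dfc a b x ^ 2)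
      + 2 * Z x * dfc a b x * dd 1 (dfc a b) x) := (h.int_dfc.sub ig).add iy
  have key := div_thm (X := Z) (F := F) sZ
    (fun l => by fin_cases l; exacts [contDiff_const, sd.pow 2, contDiff_const])
    (fun l => by fin_cases l; exacts [integrable_zero _ _ _, h.int_dfc, integrable_zero _ _ _])
    ⟨m, fun x => (bZ x).trans (by nlinarith [norm_nonneg x])⟩ (by simp only [e]; exact iD)
  simp only [e] at key
  have i1 : Integrable (fun x : Ed 3 => dfc a b x ^ 2 - cutg T (x 1) * dfc a b x ^ 2) := h.int_dfc.sub ig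
  rw [integral_add i1 iy, integral_sub h.int_dfc ig] at key
  have l := integral_mono (iy.neg) ((h.int_dfc.const_mul (1 / 2)).add ((h.int_str 1 1).const_mul (12 * m ^ 2)))
    (fun x => (neg_le_abs _).trans (yb x))
  simp only [Pi.neg_apply, Pi.add_apply] at l
  rw [integral_neg, integral_add (h.int_dfc.const_mul (1 / 2)) ((h.int_str 1 1).const_mul (12 * m ^ 2)),
    integral_const_mul, integral_const_mul] at l
  linarith

end TW

/-- The enlarged slabs around the integers overlap at most eight times. -/
lemma sum_bmp_le (T : Finset ℤ) (y : ℝ) : ∑ s ∈ T, bmp ((y - s) / 2) ≤ 8 := by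
  set U := Finset.Icc (⌊y⌋ - 3) (⌊y⌋ + 4)
  have z : ∀ s : ℤ, s ∉ U → bmp ((y - s) / 2) = 0 := fun s hs => by
    refine bmp_zero ?_
    by_contra! h1
    rw [abs_div, abs_two, div_lt_iff₀ two_pos, abs_lt] at h1
    have f1 := Int.floor_le y
    have f2 := Int.lt_floor_add_one y
    refine hs (Finset.mem_Icc.2 ⟨?_, ?_⟩)
    · have : ((⌊y⌋ - 4 : ℤ) : ℝ) < s := by push_cast; linarith
      have := Int.cast_lt.1 this
      omega
    · have : (s : ℝ) < ((⌊y⌋ + 5 : ℤ) : ℝ) := by push_cast; linarith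
      have := Int.cast_lt.1 this
      omega
  calc ∑ s ∈ T, bmp ((y - s) / 2) ≤ ∑ s ∈ T ∪ U, bmp ((y - s) / 2) :=
        Finset.sum_le_sum_of_subset_of_nonneg Finset.subset_union_left fun _ _ _ => bmp_nonneg _
    _ = ∑ s ∈ U, bmp ((y - s) / 2) :=
        (Finset.sum_subset Finset.subset_union_right fun s _ hs => z s hs).symm
    _ ≤ ∑ s ∈ U, 1 := Finset.sum_le_sum fun s _ => bmp_le_one _
    _ = 8 := by
        rw [Finset.sum_const, Int.card_Icc, nsmul_eq_mul]
        have : (⌊y⌋ + 4 + 1 - (⌊y⌋ - 3)).toNat = 8 := by omega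
        rw [this]; norm_num

/-- The energy is bounded in terms of the transversal Dirichlet energies, uniformly over traveling
waves that are uniformly Lipschitz and uniformly subsonic: the number of slabs meeting the bad set is
bounded by `slab_bound`, the potential energy is controlled off these slabs by `good_int` and across
them by `dfc_bound`, and the Pohozaev identity `poh0` recovers the whole energy from it. -/
lemma energy_bound (q κ L A : ℝ) (hq : 1 / 2 < q) (hq1 : q < 1) (hκ0 : 0 ≤ κ) (hκ1 : κ < 1) (hL : 0 < L) :
    ∃ K, ∀ (c : ℝ) (a b : Ed 3 → ℝ), TW c a b → c ^ 2 ≤ 2 * κ ^ 2 * q → c ^ 2 ≤ 2 →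
      (∀ x y, |dfc a b x - dfc a b y| ≤ L * ‖x - y‖) →
      ∫ x, str a b 1 1 x ≤ A → ∫ x, str a b 2 2 x ≤ A → ∫ x, den a b x ≤ K := by
  obtain ⟨ε, hε, H⟩ := slab_bound q κ L hq hq1 hκ0 hκ1 hL
  refine ⟨2 * A + 4 * A / (1 - κ) + 12 * (4 * (16 * A / ε)) ^ 2 * A, ?_⟩
  intro c a b h hcq hc2 hLip h1 h2
  have A0 : 0 ≤ A := (integral_nonneg fun x => str_nonneg 1 x).trans h1
  have fin : {s : ℤ | ∃ x : Ed 3, a x ^ 2 + b x ^ 2 ≤ q ∧ |x 1 - s| ≤ 1}.Finite := by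
    obtain ⟨R, hR⟩ := (h.isCompact_bad hq1).isBounded.exists_norm_le
    refine (Set.finite_Icc ⌊-R - 1⌋ ⌈R + 1⌉).subset ?_
    rintro s ⟨x, hx, hs⟩
    have r1 := abs_le.1 ((abs_coord_le x 1).trans (hR x hx))
    have r2 := abs_le.1 hs
    constructor
    · have : ((⌊-R - 1⌋ : ℤ) : ℝ) ≤ s := (Int.floor_le _).trans (by linarith)
      exact_mod_cast this
    · have : (s : ℝ) ≤ ((⌈R + 1⌉ : ℤ) : ℝ) := le_trans (by linarith) (Int.le_ceil _)
      exact_mod_cast this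
  -- `T` labels the slabs that meet the bad set, which is compact.
  set T := fin.toFinset with hTd
  have hT : ∀ x : Ed 3, cutg T (x 1) ≠ 0 → q < a x ^ 2 + b x ^ 2 := fun x hx => by
    by_contra! hb
    have hr : |x 1 - round (x 1)| ≤ 1 := (abs_sub_round _).trans (by norm_num)
    exact hx (cutg_zero (s := round (x 1)) (by rw [hTd, fin.mem_toFinset]; exact ⟨x, hb, hr⟩) hr)
  have cb : Continuous bmp := sm_bmp.continuous
  have iS : Integrable (fun x => str a b 1 1 x + str a b 2 2 x) := (h.int_str 1 1).add (h.int_str 2 2)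
  have iw : ∀ s ∈ T, Integrable (fun x : Ed 3 => bmp ((x 1 - s) / 2) * (str a b 1 1 x + str a b 2 2 x)) :=
    fun s _ => int_mul iS (by fun_prop) 1 fun x => abs_bmp _
  have card : (T.card : ℝ) ≤ 16 * A / ε := by
    rw [le_div_iff₀ hε]
    calc (T.card : ℝ) * ε = ∑ s ∈ T, ε := by rw [Finset.sum_const, nsmul_eq_mul]
      _ ≤ ∑ s ∈ T, ∫ x : Ed 3, bmp ((x 1 - s) / 2) * (str a b 1 1 x + str a b 2 2 x) :=
          Finset.sum_le_sum fun s hs => H c a b h hcq hLip s (by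
            rw [hTd, fin.mem_toFinset] at hs; exact hs)
      _ = ∫ x : Ed 3, ∑ s ∈ T, bmp ((x 1 - s) / 2) * (str a b 1 1 x + str a b 2 2 x) :=
          (integral_finset_sum _ iw).symm
      _ ≤ ∫ x : Ed 3, 8 * (str a b 1 1 x + str a b 2 2 x) := by
          refine integral_mono (integrable_finset_sum _ iw) (iS.const_mul 8) fun x => ?_
          simp only
          rw [← Finset.sum_mul]
          exact mul_le_mul_of_nonneg_right (sum_bmp_le T _) (add_nonneg (str_nonneg 1 x) (str_nonneg 2 x))
      _ = 8 * ((∫ x, str a b 1 1 x) + ∫ x, str a b 2 2 x) := by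
          rw [integral_const_mul, integral_add (h.int_str 1 1) (h.int_str 2 2)]
      _ ≤ 16 * A := by linarith
  have hκ : 0 < 1 - κ := by linarith
  have g1 : ∫ x : Ed 3, cutg T (x 1) * den a b x ≤ A / (1 - κ) := by
    rw [le_div_iff₀ hκ]
    linarith [h.good_int hq hκ0 hcq T hT]
  have cg := (sm_cutg T).continuous
  have g2 : ∫ x : Ed 3, cutg T (x 1) * dfc a b x ^ 2 ≤ 4 * ∫ x : Ed 3, cutg T (x 1) * den a b x := by
    rw [← integral_const_mul]
    refine integral_mono (int_mul h.int_dfc (by fun_prop) 1 fun x => abs_cutg T _)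
      ((int_mul h.int_den (by fun_prop) 1 fun x => abs_cutg T _).const_mul 4) fun x => ?_
    have := mul_le_mul_of_nonneg_left (dfc_le_den (a := a) (b := b) x) (cutg_nonneg T (x 1))
    simp only; linarith
  have g3 := h.dfc_bound hc2 T
  have g4 : 24 * (4 * (T.card : ℝ)) ^ 2 * ∫ x, str a b 1 1 x ≤ 24 * (4 * (16 * A / ε)) ^ 2 * A := by
    have : 0 ≤ ∫ x, str a b 1 1 x := integral_nonneg fun x => str_nonneg 1 x
    gcongr
  have g5 : ∫ x, den a b x = (∫ x, str a b 1 1 x) + (∫ x, str a b 2 2 x) + 1 / 2 * ∫ x, dfc a b x ^ 2 := by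
    have p0 := h.poh0
    have i1 : Integrable (fun x => str a b 0 0 x + str a b 1 1 x) := (h.int_str 0 0).add (h.int_str 1 1)
    have i2 : Integrable (fun x => str a b 0 0 x + str a b 1 1 x + str a b 2 2 x) := i1.add (h.int_str 2 2)
    have e : ∫ x, den a b x = ∫ x, (1 / 2 * (str a b 0 0 x + str a b 1 1 x + str a b 2 2 x) +
      1 / 4 * dfc a b x ^ 2) := rfl
    rw [integral_add (i2.const_mul _) (h.int_dfc.const_mul _), integral_const_mul, integral_const_mul,
      integral_add i1 (h.int_str 2 2), integral_add (h.int_str 0 0) (h.int_str 1 1)] at e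
    linarith
  have e6 : 4 * A / (1 - κ) = 4 * (A / (1 - κ)) := by ring
  rw [g5, e6]
  linarith

/-! ### Compactness of the translated sequence -/

lemma eDen_eq_den {ψ : Ed 3 → ℂ} (hs : Sm ψ) :
    eDen ψ = den (fun x => (ψ x).re) (fun x => (ψ x).im) := by
  funext x
  rw [eDen_eq hs x, Fin.sum_univ_three]
  simp only [den, str, dfc]
  ring

lemma continuous_eDen {ψ : Ed 3 → ℂ} (hs : Sm ψ) : Continuous (eDen ψ) := by
  rw [eDen_eq_den hs]
  exact (sm_den (sm_re hs) (sm_im hs)).continuous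

lemma eDen_nonneg (ψ : Ed 3 → ℂ) (x : Ed 3) : 0 ≤ eDen ψ x := by
  unfold eDen gradSq; positivity

lemma dd_translate {F : Type*} [NormedAddCommGroup F] [NormedSpace ℝ F] {u : Ed 3 → F} (hu : Sm u)
    (p : Ed 3) (j : Fin 3) : dd j (fun x => u (p + x)) = fun x => dd j u (p + x) := by
  simpa using dd_affine hu (ContinuousLinearMap.id ℝ (Ed 3)) p j (s := 1) (by simp)

lemma GPeq_translate {c : ℝ} {u : Ed 3 → ℂ} (hu : Sm u) (h : GPeq c u) (p : Ed 3) :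
    GPeq c (fun x => u (p + x)) := fun x => by
  have e1 : pd (fun x => u (p + x)) 0 x = pd u 0 (p + x) := congrFun (dd_translate hu p 0) x
  have e2 : lap (fun x => u (p + x)) x = lap u (p + x) := by
    change ∑ i, dd i (dd i (fun x => u (p + x))) x = ∑ i, dd i (dd i u) (p + x)
    refine Finset.sum_congr rfl fun i _ => ?_
    rw [dd_translate hu p i, dd_translate (hu.dd i) p i]
  rw [e1, e2]; exact h (p + x)

lemma eDen_translate {u : Ed 3 → ℂ} (hu : Sm u) (p x : Ed 3) :
    eDen (fun x => u (p + x)) x = eDen u (p + x) := by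
  have e : ∀ i, pd (fun x => u (p + x)) i x = pd u i (p + x) := fun i => congrFun (dd_translate hu p i) x
  simp only [eDen, gradSq, e]

/-- Finite energy of the limit, by Fatou's lemma. -/
lemma finiteEnergy_lim {f : ℕ → Ed 3 → ℂ} {ψ : Ed 3 → ℂ} (hs : ∀ n, Sm (f n)) (sψ : Sm ψ)
    (h0 : ∀ x, Tendsto (fun n => f n x) atTop (𝓝 (ψ x)))
    (h1 : ∀ i x, Tendsto (fun n => dd i (f n) x) atTop (𝓝 (dd i ψ x))) {K : ℝ}
    (hE : ∀ n, FiniteEnergy (f n)) (hK : ∀ n, ∫ x, eDen (f n) x ≤ K) : FiniteEnergy ψ := by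
  have ht : ∀ x, Tendsto (fun n => eDen (f n) x) atTop (𝓝 (eDen ψ x)) := fun x => by
    have h2 : ∀ i, Tendsto (fun n => pd (f n) i x) atTop (𝓝 (pd ψ i x)) := fun i => h1 i x
    unfold eDen gradSq
    exact ((tendsto_finset_sum _ fun i _ => ((h2 i).norm.pow 2)).const_mul _).add
      (((tendsto_const_nhds.sub ((h0 x).norm.pow 2)).pow 2).const_mul _)
  refine ⟨(continuous_eDen sψ).aestronglyMeasurable, ?_⟩
  rw [hasFiniteIntegral_iff_ofReal (Eventually.of_forall (eDen_nonneg ψ))]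
  have e : ∀ x, ENNReal.ofReal (eDen ψ x) = liminf (fun n => ENNReal.ofReal (eDen (f n) x)) atTop :=
    fun x => (((ENNReal.continuous_ofReal.tendsto _).comp (ht x)).liminf_eq).symm
  simp only [e]
  refine (lintegral_liminf_le fun n => (continuous_eDen (hs n)).measurable.ennreal_ofReal).trans_lt ?_
  refine lt_of_le_of_lt (b := ENNReal.ofReal K) ?_ ENNReal.ofReal_lt_top
  refine liminf_le_of_le (by isBoundedDefault) fun b hb => ?_
  obtain ⟨n, hn⟩ := hb.exists
  refine hn.trans ?_
  rw [← ofReal_integral_eq_lintegral_ofReal (hE n) (Eventually.of_forall (eDen_nonneg _))]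
  exact ENNReal.ofReal_le_ofReal (hK n)

/-- Compactness when all speeds stay below a constant `c0 < √2`. Every `u n` has a point where
`‖u n‖ ^ 2 ≤ q < 1`; it is translated to the origin, so that the limit satisfies the same inequality
there and is nontrivial. -/
lemma compact_aux {c c0 : ℝ} (hc01 : 1 < c0) (hc02 : c0 ^ 2 < 2)
    {γ : ℕ → ℝ} (hγ : ∀ n, 0 ≤ γ n) (hγ0 : ∀ n, γ n ≤ c0) (hlim : Tendsto γ atTop (𝓝 c))
    {u : ℕ → Ed 3 → ℂ} (hs : ∀ n, Sm (u n)) (hGP : ∀ n, GPeq (γ n) (u n))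
    (hE : ∀ n, FiniteEnergy (u n)) (hN : ∀ n, Nontriv (u n))
    (hl : ∀ n, Tendsto (u n) (cocompact (Ed 3)) (𝓝 1))
    {C : ℝ} (hC : 0 < C) (hI : ∀ n, lagr (γ n) (u n) ≤ C) :
    ∃ (p : ℕ → Ed 3) (φ : ℕ → ℕ), StrictMono φ ∧ ∃ ψ : Ed 3 → ℂ, Sm ψ ∧ GPeq c ψ ∧ FiniteEnergy ψ ∧
      Nontriv ψ ∧ LocCk (fun n x => u (φ n) (p (φ n) + x)) ψ := by
  have hTW := fun n => TW.of_GP (hs n) (hGP n) (hE n) (hl n)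
  obtain ⟨κ, q, hκ0, hκ1, hq, hq1, hκq⟩ : ∃ κ q : ℝ, 0 ≤ κ ∧ κ < 1 ∧ 1 / 2 < q ∧ q < 1 ∧ c0 ^ 2 = 2 * κ ^ 2 * q := by
    set q : ℝ := (1 + c0 ^ 2 / 2) / 2 with hq
    have q1 : 3 / 4 < q := by rw [hq]; nlinarith
    have q2 : c0 ^ 2 / (2 * q) < 1 := by
      rw [div_lt_one (by linarith)]; linarith
    refine ⟨Real.sqrt (c0 ^ 2 / (2 * q)), q, Real.sqrt_nonneg _, ?_, by linarith, by linarith, ?_⟩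
    · rw [Real.sqrt_lt' one_pos]; simpa using q2
    · rw [Real.sq_sqrt (by positivity)]; field_simp
  have hγ2 : ∀ n, γ n ^ 2 ≤ c0 ^ 2 := fun n => pow_le_pow_left₀ (hγ n) (hγ0 n) 2
  have hcq : ∀ n, γ n ^ 2 ≤ 2 * κ ^ 2 * q := fun n => by linarith [hγ2 n]
  have hc2 : ∀ n, γ n ^ 2 ≤ 2 := fun n => by linarith [hγ2 n]
  have hM : ∀ n x, ‖u n x‖ ≤ 2 := fun n x => by
    have := (hTW n).sup_bound x
    refine (abs_le_of_sq_le_sq' ?_ zero_le_two).2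
    rw [norm_sq_re_im]
    linarith [hc2 n]
  have hγa : ∀ n, |γ n| ≤ c0 := fun n => by rw [abs_of_nonneg (hγ n)]; exact hγ0 n
  obtain ⟨L, hL0, hL⟩ := lip_of_UB hs (UB_of_GP hγa hs hGP hM)
  have bad : ∀ n, ∃ x, (u n x).re ^ 2 + (u n x).im ^ 2 ≤ q := fun n => by
    by_contra! hg
    have := (hTW n).trivial_of_good hq hκ0 hκ1 (hcq n) hg
    refine hN n ⟨1, by simp, ?_⟩
    funext x
    exact Complex.ext (this x).1 (this x).2
  choose p hp using bad
  have lip : ∀ n x y, |dfc (fun x => (u n x).re) (fun x => (u n x).im) x -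
      dfc (fun x => (u n x).re) (fun x => (u n x).im) y| ≤ (4 * L + 1) * ‖x - y‖ := fun n x y => by
    simp only [dfc, ← norm_sq_re_im]
    have e : 1 - ‖u n x‖ ^ 2 - (1 - ‖u n y‖ ^ 2) = (‖u n y‖ - ‖u n x‖) * (‖u n y‖ + ‖u n x‖) := by ring
    rw [e, abs_mul]
    have h1 : |‖u n y‖ - ‖u n x‖| ≤ L * ‖x - y‖ := by
      rw [abs_sub_comm]; exact (abs_norm_sub_norm_le _ _).trans (hL n x y)
    have h2 : |‖u n y‖ + ‖u n x‖| ≤ 4 := by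
      rw [abs_of_nonneg (by positivity)]; linarith [hM n x, hM n y]
    have := mul_le_mul h1 h2 (abs_nonneg _) (mul_nonneg hL0 (norm_nonneg _))
    nlinarith [norm_nonneg (x - y)]
  have tr : ∀ n (k : Fin 3), k ≠ 0 →
      ∫ x, str (fun x => (u n x).re) (fun x => (u n x).im) k k x ≤ 2 * C := fun n k hk => by
    refine (hTW n).trans_bound hC.le ?_ k hk
    have h1 := hI n
    rw [lagr, energy, mom, eDen_eq_den (hs n)] at h1
    rw [dd_im (hs n)]
    exact h1
  obtain ⟨K, hK⟩ := energy_bound q κ (4 * L + 1) (2 * C) hq hq1 hκ0 hκ1 (by linarith)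
  have hEK : ∀ n, ∫ x, eDen (u n) x ≤ K := fun n => by
    rw [eDen_eq_den (hs n)]
    exact hK _ _ _ (hTW n) (hcq n) (hc2 n) (lip n) (tr n 1 (by decide)) (tr n 2 (by decide))
  set f : ℕ → Ed 3 → ℂ := fun n x => u n (p n + x) with hf
  have sf : ∀ n, Sm (f n) := fun n => (hs n).comp (contDiff_const.add contDiff_id)
  have fGP : ∀ n, GPeq (γ n) (f n) := fun n => GPeq_translate (hs n) (hGP n) (p n)
  obtain ⟨φ, hφ, ψ, sψ, l0, l1, l2, lC⟩ := montel sf (UB_of_GP hγa sf fGP fun n x => hM n _)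
  have fe : ∀ n, eDen (f n) = fun x => eDen (u n) (p n + x) := fun n =>
    funext fun x => eDen_translate (hs n) (p n) x
  refine ⟨p, φ, hφ, ψ, sψ, ?_, ?_, ?_, lC⟩
  · intro x
    have hc : Tendsto (fun n => ((γ (φ n) : ℝ) : ℂ)) atTop (𝓝 (c : ℂ)) :=
      (continuous_ofReal.tendsto c).comp (hlim.comp hφ.tendsto_atTop)
    have t1 : Tendsto (fun n => pd (f (φ n)) 0 x) atTop (𝓝 (pd ψ 0 x)) := l1 0 x
    have t2 : Tendsto (fun n => lap (f (φ n)) x) atTop (𝓝 (lap ψ x)) :=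
      tendsto_finset_sum _ fun i _ => l2 i x
    have t3 : Tendsto (fun n => ((‖f (φ n) x‖ : ℝ) : ℂ)) atTop (𝓝 (‖ψ x‖ : ℂ)) :=
      (continuous_ofReal.tendsto _).comp (l0 x).norm
    have t := (((tendsto_const_nhds (x := Complex.I)).mul hc).mul t1).add t2 |>.add
      (((tendsto_const_nhds (x := (1 : ℂ))).sub (t3.pow 2)).mul (l0 x))
    refine tendsto_nhds_unique t ?_
    have z : ∀ n, Complex.I * (γ (φ n) : ℂ) * pd (f (φ n)) 0 x + lap (f (φ n)) x +
      (1 - (‖f (φ n) x‖ : ℂ) ^ 2) * f (φ n) x = 0 := fun n => fGP (φ n) x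
    simp only [z]
    exact tendsto_const_nhds
  · refine finiteEnergy_lim (fun n => sf (φ n)) sψ l0 l1 (K := K) (fun n => ?_) fun n => ?_
    · rw [FiniteEnergy, fe]; exact (hE (φ n)).comp_add_left _
    · rw [fe, integral_add_left_eq_self]; exact hEK _
  · rintro ⟨z, hz, h⟩
    have t := (l0 0).norm.pow 2
    have : ‖ψ 0‖ ^ 2 ≤ q := le_of_tendsto' t fun n => by
      simp only [hf, add_zero, norm_sq_re_im]; exact hp _
    rw [h, hz] at this
    linarith

/-- compactness of the family of traveling waves in dimension 3, under a
uniform bound on the Lagrangian. -/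
theorem statement2 (c : ℝ) (hc : c ∈ Set.Ioo 0 (Real.sqrt 2))
    (cn : ℕ → ℝ) (hcn : ∀ n, cn n ∈ Set.Ioo 0 (Real.sqrt 2))
    (hclim : Tendsto cn atTop (𝓝 c))
    (ψn : ℕ → Ed 3 → ℂ)
    (hsol : ∀ n, ContDiff ℝ (⊤ : ℕ∞) (ψn n) ∧ GPeq (cn n) (ψn n) ∧
      FiniteEnergy (ψn n) ∧ Nontriv (ψn n) ∧
      Tendsto (ψn n) (cocompact (Ed 3)) (𝓝 1))
    (C : ℝ) (hC : 0 < C) (hI : ∀ n, lagr (cn n) (ψn n) ≤ C) :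
    ∃ (ξ : ℕ → Ed 3) (φ : ℕ → ℕ), StrictMono φ ∧
      ∃ ψ : Ed 3 → ℂ, ContDiff ℝ (⊤ : ℕ∞) ψ ∧ GPeq c ψ ∧ FiniteEnergy ψ ∧
        Nontriv ψ ∧ LocCk (fun n x => ψn (φ n) (x - ξ (φ n))) ψ := by
  have h2 : (1 : ℝ) < Real.sqrt 2 := by
    rw [Real.lt_sqrt zero_le_one]; norm_num
  obtain ⟨c0, h01, h02⟩ := exists_between (max_lt hc.2 h2)
  obtain ⟨hc0, h1⟩ := max_lt_iff.1 h01
  obtain ⟨N, hN⟩ := eventually_atTop.1 (hclim.eventually (ge_mem_nhds hc0))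
  obtain ⟨p, φ, hφ, ψ, sψ, H1, H2, H3, H4⟩ := compact_aux (c := c) (c0 := c0) (γ := fun n => cn (n + N))
    (u := fun n => ψn (n + N)) h1 (by
      have := pow_lt_pow_left₀ h02 (by linarith) two_ne_zero
      rwa [Real.sq_sqrt zero_le_two] at this)
    (fun n => (hcn _).1.le) (fun n => hN _ (by omega)) (hclim.comp (tendsto_add_atTop_nat N))
    (fun n => (hsol _).1) (fun n => (hsol _).2.1) (fun n => (hsol _).2.2.1)
    (fun n => (hsol _).2.2.2.1) (fun n => (hsol _).2.2.2.2) hC fun n => hI _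
  -- The compactness lemma is applied to the sequence shifted by `N`, hence the shifted indices.
  refine ⟨fun m => -p (m - N), fun n => φ n + N, fun m n h => by
    have := hφ h
    simp only; omega, ψ, sψ, H1, H2, H3, ?_⟩
  simpa only [Nat.add_sub_cancel, sub_neg_eq_add, add_comm (p _)] using H4
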